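/- arXiv:0903.3395 — 3 statements merged into one kernel-verified Lean document; each statement's English description precedes it below -/
import Mathlib

section
/- Let m, n be positive integers and let (λ_i)_{i ∈ M(m+1,n)} be a family of complex numbers that is symmetric, i.e. λ_i = λ_j whenever i and j are permutations of each other. Then for every coordinate k ∈ {0,1,…,m}, one has ∑_{i_k=1}^n ( ∑_{i^k} |i| · |λ_i|² )^{1/2} ≤ (√2)^m · √(m+1) · sup_{z^{(0)},…,z^{(m)} ∈ 𝔻^n} | ∑_{i ∈ M(m+1,n)} λ_i · z^{(0)}_{i_0} z^{(1)}_{i_1} ⋯ z^{(m)}_{i_m} |. -/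
open Finset

/-- `|i|`, the cardinality of the equivalence class of the multi-index `i` under
permutation of its coordinates. -/
noncomputable def classCard {m n : ℕ} (i : Fin m → Fin n) : ℕ :=
  Nat.card {j : Fin m → Fin n // ∃ σ : Equiv.Perm (Fin m), j = i ∘ σ}

/-!
For a polynomial `p` in one variable, replace the zeros of `p` inside the unit disc by their
reflections in the circle. This preserves `|p|` on the circle, does not decrease it inside, and the
new polynomial `q` has a holomorphic square root `g = ∑ bᵢ zⁱ` in the disc. Since the `k`-th
coefficient of `q = g²` is a sum of `k + 1 ≤ 2 ^ k` products `bᵢ bⱼ`, the Cauchy–Schwarz inequality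
gives `‖p(r ·)‖_{L²} ≤ ‖g‖²_{L²} = ‖p‖_{L¹}` on the circle for `r = 1 / √2`. Minkowski's inequality
carries this contraction over to the torus `𝕋ⁿ`, one variable at a time.

Fix `i_k = v` and let `P_v` be the `m`-homogeneous polynomial with the remaining coefficients. As
`P_v(r z) = r ^ m P_v(z)`, Parseval's identity bounds `(∑ |j| |λ|²)^{1/2}` by `√2 ^ m ‖P_v‖_{L¹}`,
and `|i| ≤ (m + 1) |j|` when `j` is `i` without its `k`-th coordinate. Finally `∑_v |P_v(z)|` is a
value of the multilinear form, with the phases of the `P_v(z)` in the `k`-th slot, so it is at most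
the supremum over the polydisc for every `z` in the torus.
-/

namespace MixedNorm

open MeasureTheory Metric
open scoped Topology ComplexConjugate

section IntegralNorms

variable {X Y : Type*} [TopologicalSpace X] [CompactSpace X] [TopologicalSpace Y] [CompactSpace Y]
  [MeasurableSpace Y] [BorelSpace Y]

lemma continuous_integral [T2Space X] [FirstCountableTopology X] (ν : Measure Y)
    [IsFiniteMeasure ν] {f : X → Y → ℝ} (hf : Continuous f.uncurry) :
    Continuous fun x ↦ ∫ y, f x y ∂ν := by
  simpa using continuous_parametric_integral_of_continuous (μ := ν) hf isCompact_univ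

variable [MeasurableSpace X] [BorelSpace X]

lemma integrable_of_continuous {E : Type*} [NormedAddCommGroup E] {μ : Measure X}
    [IsFiniteMeasure μ] {f : X → E} (hf : Continuous f) : Integrable f μ :=
  hf.integrable_of_hasCompactSupport (.of_compactSpace f)

lemma norm_toLp_sq {𝕜 : Type*} [RCLike 𝕜] [SecondCountableTopologyEither X 𝕜] (μ : Measure X)
    [IsFiniteMeasure μ] (f : C(X, 𝕜)) :
    ‖f.toLp 2 μ 𝕜‖ ^ 2 = ∫ x, ‖f x‖ ^ 2 ∂μ := by
  have h := inner_self_eq_norm_sq_to_K (𝕜 := 𝕜) (f.toLp 2 μ 𝕜)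
  rw [ContinuousMap.inner_toLp] at h
  simp_rw [RCLike.mul_conj] at h
  have hcast : ∫ x, ((‖f x‖ : 𝕜) ^ 2) ∂μ = ((∫ x, ‖f x‖ ^ 2 ∂μ : ℝ) : 𝕜) := by
    rw [← integral_ofReal]; simp
  rw [hcast] at h
  exact_mod_cast h.symm

lemma integral_norm_sum_mul_sq {𝕜 ι : Type*} [RCLike 𝕜] [SecondCountableTopologyEither X 𝕜]
    (μ : Measure X) [IsFiniteMeasure μ] {e : ι → C(X, 𝕜)}
    (he : Orthonormal 𝕜 fun i ↦ (e i).toLp 2 μ 𝕜) (s : Finset ι) (c : ι → 𝕜) :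
    ∫ x, ‖∑ i ∈ s, c i * e i x‖ ^ 2 ∂μ = ∑ i ∈ s, ‖c i‖ ^ 2 := by
  have hsum := norm_toLp_sq μ (∑ i ∈ s, c i • e i)
  simp only [ContinuousMap.coe_sum, ContinuousMap.coe_smul, Finset.sum_apply, Pi.smul_apply,
    smul_eq_mul] at hsum
  rw [← hsum, map_sum]
  simp only [map_smul]
  have hinner := he.inner_sum c c s
  rw [inner_self_eq_norm_sq_to_K] at hinner
  simp only [RCLike.conj_mul] at hinner
  exact_mod_cast hinner

lemma sqrt_integral_sq_integral_le (μ : Measure X) (ν : Measure Y) [IsFiniteMeasure μ]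
    [IsFiniteMeasure ν] {f : X → Y → ℝ} (hf : Continuous f.uncurry) :
    √(∫ x, (∫ y, f x y ∂ν) ^ 2 ∂μ) ≤ ∫ y, √(∫ x, f x y ^ 2 ∂μ) ∂ν := by
  let F : C(Y, C(X, ℝ)) := ContinuousMap.curry ⟨fun p ↦ f p.2 p.1, hf.comp continuous_swap⟩
  have hF : Integrable (fun y ↦ F y) ν := integrable_of_continuous F.continuous
  have norm_eq (u : C(X, ℝ)) : ‖u.toLp 2 μ ℝ‖ = √(∫ x, u x ^ 2 ∂μ) := by
    rw [← Real.sqrt_sq (norm_nonneg (u.toLp 2 μ ℝ)), norm_toLp_sq]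
    simp
  calc √(∫ x, (∫ y, f x y ∂ν) ^ 2 ∂μ) = ‖(∫ y, F y ∂ν).toLp 2 μ ℝ‖ := by
        simp_rw [norm_eq, ContinuousMap.integral_apply hF]; rfl
    _ = ‖∫ y, (F y).toLp 2 μ ℝ ∂ν‖ := by rw [ContinuousLinearMap.integral_comp_comm _ hF]
    _ ≤ ∫ y, ‖(F y).toLp 2 μ ℝ‖ ∂ν := norm_integral_le_integral_norm _
    _ = ∫ y, √(∫ x, f x y ^ 2 ∂μ) ∂ν := by simp_rw [norm_eq]; rfl

lemma sqrt_integral_integral_sq_le_integral_integral [T2Space X] [FirstCountableTopology X]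
    [T2Space Y] [FirstCountableTopology Y] [SecondCountableTopologyEither X Y]
    (μ : Measure X) (ν : Measure Y) [IsFiniteMeasure μ] [IsFiniteMeasure ν] {f g h : X → Y → ℝ}
    (hf : Continuous f.uncurry) (hg : Continuous g.uncurry) (hh : Continuous h.uncurry)
    (hfg : ∀ x, ∫ y, f x y ^ 2 ∂ν ≤ (∫ y, g x y ∂ν) ^ 2)
    (hgh : ∀ y, √(∫ x, g x y ^ 2 ∂μ) ≤ ∫ x, h x y ∂μ) :
    √(∫ x, ∫ y, f x y ^ 2 ∂ν ∂μ) ≤ ∫ x, ∫ y, h x y ∂ν ∂μ := by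
  have hf' : Continuous (Function.uncurry fun x y ↦ f x y ^ 2) := hf.pow 2
  have hg' : Continuous (Function.uncurry fun y x ↦ g x y ^ 2) :=
    (hg.comp continuous_swap).pow 2
  have hh' : Continuous (Function.uncurry fun y x ↦ h x y) := hh.comp continuous_swap
  calc √(∫ x, ∫ y, f x y ^ 2 ∂ν ∂μ) ≤ √(∫ x, (∫ y, g x y ∂ν) ^ 2 ∂μ) :=
        Real.sqrt_le_sqrt <| integral_mono (integrable_of_continuous (continuous_integral ν hf'))
          (integrable_of_continuous ((continuous_integral ν hg).pow 2)) hfg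
    _ ≤ ∫ y, √(∫ x, g x y ^ 2 ∂μ) ∂ν := sqrt_integral_sq_integral_le μ ν hg
    _ ≤ ∫ y, ∫ x, h x y ∂μ ∂ν :=
        integral_mono (integrable_of_continuous (continuous_integral μ hg').sqrt)
          (integrable_of_continuous (continuous_integral μ hh')) hgh
    _ = ∫ x, ∫ y, h x y ∂ν ∂μ := (integral_integral_swap (integrable_of_continuous hh)).symm

end IntegralNorms

/-- The circle `ℝ / ℤ` and the tori `(ℝ / ℤ)^σ` carry the normalized Haar measure, for which
Mathlib states the orthonormality of the Fourier monomials on a torus. -/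
noncomputable local instance circleMeasureSpace : MeasureSpace UnitAddCircle :=
  ⟨AddCircle.haarAddCircle⟩

local instance circleIsProbabilityMeasure : IsProbabilityMeasure (volume : Measure UnitAddCircle) :=
  inferInstanceAs (IsProbabilityMeasure AddCircle.haarAddCircle)

/-- The point of the distinguished boundary `𝕋^σ` of the polydisc with angles `2π x`. -/
noncomputable def torusPoint {σ : Type*} (x : UnitAddTorus σ) (i : σ) : ℂ := (x i).toCircle

@[fun_prop]
lemma continuous_torusPoint {σ : Type*} : Continuous (torusPoint (σ := σ)) := by
  unfold torusPoint; fun_prop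

lemma integral_norm_eval_sq {σ : Type*} [Fintype σ] (P : MvPolynomial σ ℂ) :
    ∫ x : UnitAddTorus σ, ‖P.eval (torusPoint x)‖ ^ 2 = ∑ α ∈ P.support, ‖P.coeff α‖ ^ 2 := by
  let e (α : σ →₀ ℕ) : C(UnitAddTorus σ, ℂ) := UnitAddTorus.mFourier fun i ↦ (α i : ℤ)
  have he : Orthonormal ℂ fun α ↦ (e α).toLp 2 volume ℂ := by
    have hinj : Function.Injective fun (α : σ →₀ ℕ) i ↦ (α i : ℤ) := fun α β h ↦
      Finsupp.ext fun i ↦ Int.ofNat_inj.mp (congrFun h i)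
    exact UnitAddTorus.orthonormal_mFourier.comp _ hinj
  rw [← integral_norm_sum_mul_sq volume he P.support P.coeff]
  refine integral_congr_ae (.of_forall fun x ↦ ?_)
  simp only [MvPolynomial.eval_eq', e, UnitAddTorus.mFourier, torusPoint, ContinuousMap.coe_mk,
    natCast_zsmul, fourier_apply, AddCircle.toCircle_nsmul, Circle.coe_pow]

lemma circleAverage_zero_one_eq_integral {E : Type*} [NormedAddCommGroup E] [NormedSpace ℝ E]
    (f : ℂ → E) :
    Real.circleAverage f 0 1 = ∫ x : UnitAddCircle, f x.toCircle := by
  have htoCircle (t : ℝ) :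
      (AddCircle.toCircle (t : UnitAddCircle) : ℂ) = circleMap 0 1 (2 * Real.pi * t) := by
    simp [AddCircle.toCircle_apply_mk, circleMap]
  change _ = ∫ x : UnitAddCircle, f x.toCircle ∂AddCircle.haarAddCircle
  rw [AddCircle.integral_haarAddCircle, ← AddCircle.intervalIntegral_preimage 1 0]
  simp_rw [htoCircle, Real.circleAverage]
  rw [intervalIntegral.integral_comp_mul_left (fun t ↦ f (circleMap 0 1 t)) Real.two_pi_pos.ne']
  simp

section SquareRootMajorant

open Polynomial

/-- On the unit circle `q` has the same modulus as `p`, inside the disc it dominates `p`, and it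
has a holomorphic square root there, continuous up to the circle. The outer factor of `p` is such
a `q`. -/
structure IsSqrtMajorant (p q : ℂ[X]) : Prop where
  exists_sqrt : ∃ g : ℂ → ℂ, DiffContOnCl ℂ g (ball 0 1) ∧
    ∀ z ∈ closedBall (0 : ℂ) 1, g z ^ 2 = q.eval z
  norm_eval_le : ∀ z ∈ closedBall (0 : ℂ) 1, ‖p.eval z‖ ≤ ‖q.eval z‖
  norm_eval_eq : ∀ z ∈ sphere (0 : ℂ) 1, ‖p.eval z‖ = ‖q.eval z‖

lemma exists_sqrt_mul_one_sub_mul (c : ℂ) {b : ℂ} (hb : ‖b‖ ≤ 1) :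
    ∃ g : ℂ → ℂ, DiffContOnCl ℂ g (ball 0 1) ∧ ∀ z, g z ^ 2 = c * (1 - b * z) := by
  have re_le {z : ℂ} : (b * z).re ≤ ‖z‖ :=
    (Complex.re_le_norm _).trans <| (norm_mul b z).trans_le <|
      mul_le_of_le_one_left (norm_nonneg z) hb
  have sqrt_sq (w : ℂ) : Complex.sqrt w ^ 2 = w := Complex.cpow_ofNat_inv_pow w 2
  refine ⟨fun z ↦ Complex.sqrt c * Complex.sqrt (1 - b * z), ⟨fun z hz ↦ ?_, fun z hz ↦ ?_⟩,
    fun z ↦ by rw [mul_pow, sqrt_sq, sqrt_sq]⟩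
  · have hre : 0 < (1 - b * z).re := by
      rw [Complex.sub_re, Complex.one_re, sub_pos]
      exact re_le.trans_lt (mem_ball_zero_iff.mp hz)
    have hsqrt : DifferentiableAt ℂ Complex.sqrt (1 - b * z) :=
      Complex.differentiableAt_sqrt (.inl hre)
    fun_prop
  · have hre : 0 ≤ (1 - b * z).re := by
      rw [closure_ball 0 one_ne_zero, mem_closedBall_zero_iff] at hz
      rw [Complex.sub_re, Complex.one_re, sub_nonneg]
      exact re_le.trans hz
    have hsqrt : ContinuousAt Complex.sqrt (1 - b * z) := Complex.continuousAt_sqrt (.inl hre)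
    exact (continuousAt_const.mul
      (ContinuousAt.comp (f := fun z ↦ 1 - b * z) hsqrt (by fun_prop))).continuousWithinAt

lemma isSqrtMajorant_self_C (c : ℂ) : IsSqrtMajorant (C c) (C c) where
  exists_sqrt := by
    obtain ⟨g, hg, hgsq⟩ := exists_sqrt_mul_one_sub_mul c (b := 0) (by simp)
    exact ⟨g, hg, fun z _ ↦ by simp [hgsq]⟩
  norm_eval_le _ _ := le_rfl
  norm_eval_eq _ _ := rfl

lemma IsSqrtMajorant.mul {p₁ p₂ q₁ q₂ : ℂ[X]} (h₁ : IsSqrtMajorant p₁ q₁)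
    (h₂ : IsSqrtMajorant p₂ q₂) : IsSqrtMajorant (p₁ * p₂) (q₁ * q₂) where
  exists_sqrt := by
    obtain ⟨g₁, hg₁, hsq₁⟩ := h₁.exists_sqrt
    obtain ⟨g₂, hg₂, hsq₂⟩ := h₂.exists_sqrt
    refine ⟨fun z ↦ g₁ z * g₂ z, hg₁.smul hg₂, fun z hz ↦ ?_⟩
    rw [mul_pow, hsq₁ z hz, hsq₂ z hz, eval_mul]
  norm_eval_le z hz := by
    rw [eval_mul, eval_mul, norm_mul, norm_mul]
    gcongr
    exacts [h₁.norm_eval_le z hz, h₂.norm_eval_le z hz]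
  norm_eval_eq z hz := by
    rw [eval_mul, eval_mul, norm_mul, norm_mul, h₁.norm_eval_eq z hz, h₂.norm_eval_eq z hz]

lemma norm_one_add_conj_mul_sq_sub_norm_add_sq (a z : ℂ) :
    ‖1 + conj a * z‖ ^ 2 - ‖z + a‖ ^ 2 = (1 - ‖a‖ ^ 2) * (1 - ‖z‖ ^ 2) := by
  simp only [Complex.sq_norm, Complex.normSq_apply, Complex.add_re, Complex.add_im,
    Complex.mul_re, Complex.mul_im, Complex.conj_re, Complex.conj_im, Complex.one_re,
    Complex.one_im]
  ring

-- The Blaschke factor `(z + a) / (1 + ā z)` is bounded by `1` on the disc and unimodular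
-- on the circle.
lemma isSqrtMajorant_X_add_C_reflect {a : ℂ} (ha : ‖a‖ ≤ 1) :
    IsSqrtMajorant (X + C a) (1 + C (conj a) * X) where
  exists_sqrt := by
    obtain ⟨g, hg, hgsq⟩ := exists_sqrt_mul_one_sub_mul 1 (b := -conj a) (by simpa)
    exact ⟨g, hg, fun z _ ↦ by simp [hgsq]⟩
  norm_eval_le z hz := by
    rw [mem_closedBall_zero_iff] at hz
    refine le_of_sq_le_sq ?_ (norm_nonneg _)
    have hmul : 0 ≤ (1 - ‖a‖ ^ 2) * (1 - ‖z‖ ^ 2) :=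
      mul_nonneg (sub_nonneg.mpr (pow_le_one₀ (norm_nonneg a) ha))
        (sub_nonneg.mpr (pow_le_one₀ (norm_nonneg z) hz))
    rw [← norm_one_add_conj_mul_sq_sub_norm_add_sq] at hmul
    simpa using hmul
  norm_eval_eq z hz := by
    have h := norm_one_add_conj_mul_sq_sub_norm_add_sq a z
    rw [mem_sphere_zero_iff_norm.mp hz, one_pow, sub_self, mul_zero, sub_eq_zero] at h
    simpa using ((pow_left_inj₀ (norm_nonneg _) (norm_nonneg _) two_ne_zero).mp h).symm

lemma isSqrtMajorant_self_X_add_C {a : ℂ} (ha : 1 ≤ ‖a‖) :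
    IsSqrtMajorant (X + C a) (X + C a) where
  exists_sqrt := by
    obtain ⟨g, hg, hgsq⟩ := exists_sqrt_mul_one_sub_mul a (b := -a⁻¹)
      (by simpa using inv_le_one_of_one_le₀ ha)
    have ha0 : a ≠ 0 := norm_pos_iff.mp (one_pos.trans_le ha)
    exact ⟨g, hg, fun z _ ↦ by rw [hgsq, eval_add, eval_X, eval_C]; field_simp; ring⟩
  norm_eval_le _ _ := le_rfl
  norm_eval_eq _ _ := rfl

theorem exists_isSqrtMajorant (p : ℂ[X]) : ∃ q, IsSqrtMajorant p q := by
  refine Submonoid.closure_induction ?_ ⟨1, isSqrtMajorant_self_C 1⟩ ?_ (IsAlgClosed.splits p)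
  · rintro _ (⟨c, rfl⟩ | ⟨a, rfl⟩)
    · exact ⟨C c, isSqrtMajorant_self_C c⟩
    · rcases le_total ‖a‖ 1 with ha | ha
      · exact ⟨_, isSqrtMajorant_X_add_C_reflect ha⟩
      · exact ⟨_, isSqrtMajorant_self_X_add_C ha⟩
  · rintro p₁ p₂ - - ⟨q₁, h₁⟩ ⟨q₂, h₂⟩
    exact ⟨q₁ * q₂, h₁.mul h₂⟩

end SquareRootMajorant

section OneVariable

open Polynomial Nat

lemma sum_pow_mul_norm_sum_antidiagonal_sq_le (b : ℕ → ℂ) (N : ℕ) :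
    ∑ k ∈ range N, (1 / 2 : ℝ) ^ k * ‖∑ ij ∈ antidiagonal k, b ij.1 * b ij.2‖ ^ 2
      ≤ (∑ i ∈ range N, ‖b i‖ ^ 2) ^ 2 := by
  have hterm (k : ℕ) : (1 / 2 : ℝ) ^ k * ‖∑ ij ∈ antidiagonal k, b ij.1 * b ij.2‖ ^ 2
      ≤ ∑ ij ∈ antidiagonal k, ‖b ij.1‖ ^ 2 * ‖b ij.2‖ ^ 2 := by
    have hk : ((k : ℝ) + 1) ≤ 2 ^ k := mod_cast k.lt_two_pow_self
    calc (1 / 2 : ℝ) ^ k * ‖∑ ij ∈ antidiagonal k, b ij.1 * b ij.2‖ ^ 2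
        ≤ (1 / 2 : ℝ) ^ k * (∑ ij ∈ antidiagonal k, ‖b ij.1 * b ij.2‖) ^ 2 := by
          gcongr; exact norm_sum_le _ _
      _ ≤ (1 / 2 : ℝ) ^ k * (2 ^ k * ∑ ij ∈ antidiagonal k, ‖b ij.1 * b ij.2‖ ^ 2) := by
          gcongr
          refine sq_sum_le_card_mul_sum_sq.trans ?_
          rw [Nat.card_antidiagonal]
          gcongr
          exact_mod_cast hk
      _ = ∑ ij ∈ antidiagonal k, ‖b ij.1‖ ^ 2 * ‖b ij.2‖ ^ 2 := by
          rw [← mul_assoc, ← mul_pow]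
          simp [mul_pow]
  calc ∑ k ∈ range N, (1 / 2 : ℝ) ^ k * ‖∑ ij ∈ antidiagonal k, b ij.1 * b ij.2‖ ^ 2
      ≤ ∑ k ∈ range N, ∑ ij ∈ range N ×ˢ range N with ij.1 + ij.2 = k,
          ‖b ij.1‖ ^ 2 * ‖b ij.2‖ ^ 2 := by
        refine sum_le_sum fun k hk ↦ (hterm k).trans_eq (sum_congr ?_ fun _ _ ↦ rfl)
        ext ij
        simp only [HasAntidiagonal.mem_antidiagonal, mem_filter, mem_product, mem_range] at hk ⊢
        lia
    _ ≤ ∑ ij ∈ range N ×ˢ range N, ‖b ij.1‖ ^ 2 * ‖b ij.2‖ ^ 2 :=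
        sum_fiberwise_le_sum_of_sum_fiber_nonneg fun _ _ ↦ by positivity
    _ = (∑ i ∈ range N, ‖b i‖ ^ 2) ^ 2 := by rw [sum_product, sq, sum_mul_sum]

lemma iteratedDeriv_eval_zero (q : ℂ[X]) (k : ℕ) :
    iteratedDeriv k (fun z ↦ q.eval z) 0 = k ! * q.coeff k := by
  have h (k : ℕ) : iteratedDeriv k (fun z ↦ q.eval z) = fun z ↦ (derivative^[k] q).eval z := by
    induction k with
    | zero => simp
    | succ k ih => ext z; simp [iteratedDeriv_succ, ih, Function.iterate_succ_apply']
  simp only [h]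
  rw [← coeff_zero_eq_eval_zero, coeff_iterate_derivative, zero_add, descFactorial_self,
    nsmul_eq_mul]

/-- The `k`-th Taylor coefficient of `g` at `0`. -/
noncomputable def taylorCoeff (g : ℂ → ℂ) (k : ℕ) : ℂ := iteratedDeriv k g 0 / k !

lemma coeff_eq_sum_taylorCoeff_mul {g : ℂ → ℂ} {q : ℂ[X]} (hg : DifferentiableOn ℂ g (ball 0 1))
    (hsq : ∀ z ∈ ball (0 : ℂ) 1, g z ^ 2 = q.eval z) (k : ℕ) :
    q.coeff k = ∑ ij ∈ antidiagonal k, taylorCoeff g ij.1 * taylorCoeff g ij.2 := by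
  have hball : ball (0 : ℂ) 1 ∈ 𝓝 0 := ball_mem_nhds 0 one_pos
  have hcd : ContDiffAt ℂ k g 0 := (hg.analyticAt hball).contDiffAt
  have hfact : (k ! : ℂ) ≠ 0 := mod_cast k.factorial_ne_zero
  have heq : (fun z ↦ q.eval z) =ᶠ[𝓝 0] fun z ↦ g z * g z :=
    Filter.eventually_of_mem hball fun z hz ↦ by simp only [← hsq z hz, sq]
  rw [← mul_right_inj' hfact, ← iteratedDeriv_eval_zero, heq.iteratedDeriv_eq,
    iteratedDeriv_fun_mul hcd hcd, Finset.Nat.sum_antidiagonal_eq_sum_range_succ_mk, mul_sum]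
  refine sum_congr rfl fun i hi ↦ ?_
  have hik : i ≤ k := Nat.lt_succ_iff.mp (mem_range.mp hi)
  rw [← choose_mul_factorial_mul_factorial hik]
  have hi : (i ! : ℂ) ≠ 0 := mod_cast i.factorial_ne_zero
  have hki : ((k - i)! : ℂ) ≠ 0 := mod_cast (k - i).factorial_ne_zero
  push_cast [taylorCoeff]
  field_simp

lemma taylorCoeff_eq_integral {g : ℂ → ℂ} (hg : DiffContOnCl ℂ g (ball 0 1)) (k : ℕ) :
    taylorCoeff g k = ∫ x : UnitAddCircle, fourier (-k) x * g x.toCircle := by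
  have hCauchy := hg.circleIntegral_one_div_sub_center_pow_smul one_pos k
  have havg := Real.circleAverage_eq_circleIntegral (c := 0) (R := 1)
    (f := fun z : ℂ ↦ (z ^ k)⁻¹ * g z) one_ne_zero
  rw [circleAverage_zero_one_eq_integral] at havg
  calc taylorCoeff g k = (2 * Real.pi * Complex.I : ℂ)⁻¹ •
        ∮ z in C(0, 1), (1 / (z - 0) ^ (k + 1)) • g z := by
        rw [hCauchy, taylorCoeff, smul_smul, smul_eq_mul]
        field_simp
    _ = ∫ x : UnitAddCircle, ((x.toCircle : ℂ) ^ k)⁻¹ * g x.toCircle := by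
        rw [havg]
        simp [pow_succ, mul_assoc]
    _ = _ := by
        simp [fourier_apply, AddCircle.toCircle_nsmul, AddCircle.toCircle_neg]

lemma sum_norm_taylorCoeff_sq_le {g : ℂ → ℂ} (hg : DiffContOnCl ℂ g (ball 0 1)) (N : ℕ) :
    ∑ k ∈ range N, ‖taylorCoeff g k‖ ^ 2 ≤ ∫ x : UnitAddCircle, ‖g x.toCircle‖ ^ 2 := by
  have hcont : Continuous fun x : UnitAddCircle ↦ g x.toCircle :=
    hg.continuousOn_ball.comp_continuous (by fun_prop) fun x ↦ by
      simp [Circle.norm_coe]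
  let G : C(UnitAddCircle, ℂ) := ⟨fun x ↦ g x.toCircle, hcont⟩
  have horth : Orthonormal ℂ fun k : ℕ ↦ (fourier (T := 1) k).toLp 2 volume ℂ :=
    orthonormal_fourier.comp _ Nat.cast_injective
  have hBessel := horth.sum_inner_products_le (G.toLp 2 volume ℂ) (s := range N)
  rw [norm_toLp_sq] at hBessel
  refine le_trans (sum_le_sum fun k _ ↦ le_of_eq ?_) hBessel
  rw [taylorCoeff_eq_integral hg, ContinuousMap.inner_toLp]
  simp_rw [← fourier_neg, mul_comm (fourier _ _)]
  rfl

lemma integral_norm_eval_const_mul_sq (q : ℂ[X]) (r : ℂ) :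
    ∫ x : UnitAddCircle, ‖q.eval (r * x.toCircle : ℂ)‖ ^ 2
      = ∑ k ∈ range (q.natDegree + 1), (‖r‖ ^ 2) ^ k * ‖q.coeff k‖ ^ 2 := by
  have hParseval := (q.comp (C r * X)).sum_sq_norm_coeff_eq_circleAverage
  rw [circleAverage_zero_one_eq_integral] at hParseval
  simp only [eval_comp, eval_mul, eval_C, eval_X, comp_C_mul_X_coeff, norm_mul,
    norm_pow] at hParseval
  rw [← hParseval]
  refine (sum_subset (fun k hk ↦ ?_) fun k _ hk ↦ ?_).trans (sum_congr rfl fun k _ ↦ by ring)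
  · rw [mem_support_iff, comp_C_mul_X_coeff] at hk
    exact q.supp_subset_range_natDegree_succ (mem_support_iff.mpr (left_ne_zero_of_mul hk))
  · rw [notMem_support_iff, comp_C_mul_X_coeff] at hk
    simp [← norm_pow, ← norm_mul, hk]

theorem integral_norm_eval_const_mul_sq_le (p : ℂ[X]) {r : ℂ} (hr : ‖r‖ ^ 2 ≤ 1 / 2) :
    ∫ x : UnitAddCircle, ‖p.eval (r * x.toCircle : ℂ)‖ ^ 2
      ≤ (∫ x : UnitAddCircle, ‖p.eval (x.toCircle : ℂ)‖) ^ 2 := by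
  obtain ⟨q, hq⟩ := exists_isSqrtMajorant p
  obtain ⟨g, hg, hsq⟩ := hq.exists_sqrt
  have hcoeff (k : ℕ) := coeff_eq_sum_taylorCoeff_mul hg.differentiableOn
    (fun z hz ↦ hsq z (ball_subset_closedBall hz)) k
  have hr1 : ‖r‖ ≤ 1 := by nlinarith
  calc ∫ x : UnitAddCircle, ‖p.eval (r * x.toCircle : ℂ)‖ ^ 2
      ≤ ∫ x : UnitAddCircle, ‖q.eval (r * x.toCircle : ℂ)‖ ^ 2 := by
        refine integral_mono (integrable_of_continuous (by fun_prop))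
          (integrable_of_continuous (by fun_prop)) fun x ↦ ?_
        have := hq.norm_eval_le (r * x.toCircle) (by simpa [Circle.norm_coe] using hr1)
        gcongr
    _ = ∑ k ∈ range (q.natDegree + 1), (‖r‖ ^ 2) ^ k *
          ‖∑ ij ∈ antidiagonal k, taylorCoeff g ij.1 * taylorCoeff g ij.2‖ ^ 2 := by
        simp_rw [integral_norm_eval_const_mul_sq, hcoeff]
    _ ≤ ∑ k ∈ range (q.natDegree + 1), (1 / 2) ^ k *
          ‖∑ ij ∈ antidiagonal k, taylorCoeff g ij.1 * taylorCoeff g ij.2‖ ^ 2 := by gcongr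
    _ ≤ (∑ k ∈ range (q.natDegree + 1), ‖taylorCoeff g k‖ ^ 2) ^ 2 :=
        sum_pow_mul_norm_sum_antidiagonal_sq_le _ _
    _ ≤ (∫ x : UnitAddCircle, ‖g x.toCircle‖ ^ 2) ^ 2 := by
        gcongr; exact sum_norm_taylorCoeff_sq_le hg _
    _ = (∫ x : UnitAddCircle, ‖p.eval (x.toCircle : ℂ)‖) ^ 2 := by
        congr! 3 with x
        have hx : (x.toCircle : ℂ) ∈ sphere (0 : ℂ) 1 := x.toCircle.2
        rw [← norm_pow, hsq _ (sphere_subset_closedBall hx), hq.norm_eval_eq _ hx]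

end OneVariable

section Tensorization

lemma torusPoint_cons {n : ℕ} (t : UnitAddCircle) (y : UnitAddTorus (Fin n)) :
    torusPoint (Fin.cons t y : UnitAddTorus (Fin (n + 1))) = Fin.cons ↑t.toCircle (torusPoint y) :=
  funext <| Fin.cases rfl fun _ ↦ rfl

lemma smul_cons {n : ℕ} (r a : ℂ) (z : Fin n → ℂ) :
    r • (Fin.cons a z : Fin (n + 1) → ℂ) = Fin.cons (r * a) (r • z) :=
  funext <| Fin.cases rfl fun _ ↦ rfl

lemma integral_torus_succ {n : ℕ} {f : UnitAddTorus (Fin (n + 1)) → ℝ} (hf : Continuous f) :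
    ∫ x, f x = ∫ t : UnitAddCircle, ∫ y : UnitAddTorus (Fin n), f (Fin.cons t y) := by
  have hmp := (volume_preserving_piFinSuccAbove (fun _ : Fin (n + 1) ↦ UnitAddCircle) 0).symm
  rw [← hmp.integral_comp' f, Measure.volume_eq_prod, integral_prod]
  · simp [MeasurableEquiv.piFinSuccAbove, Fin.consEquiv]
  · exact hmp.integrable_comp_of_integrable (integrable_of_continuous hf)

lemma sqrt_integral_integral_smul_sq_le {n : ℕ} {r : ℂ} {f : ℂ → (Fin n → ℂ) → ℝ}
    (hf : Continuous f.uncurry)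
    (hslice : ∀ a, ∫ y : UnitAddTorus (Fin n), f a (r • torusPoint y) ^ 2
      ≤ (∫ y : UnitAddTorus (Fin n), f a (torusPoint y)) ^ 2)
    (hfiber : ∀ z, √(∫ t : UnitAddCircle, f (r * t.toCircle) z ^ 2)
      ≤ ∫ t : UnitAddCircle, f t.toCircle z) :
    √(∫ t : UnitAddCircle, ∫ y : UnitAddTorus (Fin n), f (r * t.toCircle) (r • torusPoint y) ^ 2)
      ≤ ∫ t : UnitAddCircle, ∫ y : UnitAddTorus (Fin n), f t.toCircle (torusPoint y) := by
  have hcont (a b : ℂ) : Continuous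
      (Function.uncurry fun (t : UnitAddCircle) (y : UnitAddTorus (Fin n)) ↦
        f (a * t.toCircle) (b • torusPoint y)) :=
    hf.comp (g := f.uncurry) (f := fun p : UnitAddCircle × UnitAddTorus (Fin n) ↦
      (a * (p.1.toCircle : ℂ), b • torusPoint p.2)) (by fun_prop)
  have hfull := hcont r r
  have hmixed := hcont r 1
  have hplain := hcont 1 1
  simp only [one_smul, one_mul] at hmixed hplain
  exact sqrt_integral_integral_sq_le_integral_integral volume volume hfull hmixed hplain
    (fun t ↦ hslice _) fun y ↦ hfiber _

theorem sqrt_integral_norm_eval_smul_sq_le {n : ℕ} (P : MvPolynomial (Fin n) ℂ) {r : ℂ}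
    (hr : ‖r‖ ^ 2 ≤ 1 / 2) :
    √(∫ x : UnitAddTorus (Fin n), ‖P.eval (r • torusPoint x)‖ ^ 2)
      ≤ ∫ x : UnitAddTorus (Fin n), ‖P.eval (torusPoint x)‖ := by
  induction n with
  | zero =>
    have heval (x : UnitAddTorus (Fin 0)) :
        ‖P.eval (r • torusPoint x)‖ = ‖P.eval 0‖ ∧ ‖P.eval (torusPoint x)‖ = ‖P.eval 0‖ := by
      constructor <;> congr!
    simp_rw [heval]
    simp
  | succ n ih =>
    let f (a : ℂ) (z : Fin n → ℂ) : ℝ := ‖P.eval (Fin.cons a z : Fin (n + 1) → ℂ)‖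
    have hf : Continuous f.uncurry :=
      (P.continuous_eval.comp (continuous_fst.finCons continuous_snd)).norm
    have hslice (a : ℂ) : ∫ y : UnitAddTorus (Fin n), f a (r • torusPoint y) ^ 2
        ≤ (∫ y : UnitAddTorus (Fin n), f a (torusPoint y)) ^ 2 := by
      have h := ih ((MvPolynomial.finSuccEquiv ℂ n P).eval (.C a))
      simp only [MvPolynomial.eval_polynomial_eval_finSuccEquiv, MvPolynomial.eval_C] at h
      exact (Real.sqrt_le_left (integral_nonneg fun _ ↦ norm_nonneg _)).mp h
    have hfiber (z : Fin n → ℂ) :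
        √(∫ t : UnitAddCircle, f (r * t.toCircle) z ^ 2) ≤ ∫ t : UnitAddCircle, f t.toCircle z := by
      have h := integral_norm_eval_const_mul_sq_le
        ((MvPolynomial.finSuccEquiv ℂ n P).map (MvPolynomial.eval z)) hr
      simp only [← MvPolynomial.eval_eq_eval_mv_eval'] at h
      exact (Real.sqrt_le_left (integral_nonneg fun _ ↦ norm_nonneg _)).mpr h
    have hP : Continuous fun x : UnitAddTorus (Fin (n + 1)) ↦ ‖P.eval (torusPoint x)‖ :=
      (P.continuous_eval.comp continuous_torusPoint).norm
    have hPr : Continuous fun x : UnitAddTorus (Fin (n + 1)) ↦ ‖P.eval (r • torusPoint x)‖ ^ 2 :=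
      (P.continuous_eval.comp (continuous_torusPoint.const_smul r)).norm.pow 2
    rw [integral_torus_succ hPr, integral_torus_succ hP]
    simp only [torusPoint_cons, smul_cons]
    exact sqrt_integral_integral_smul_sq_le hf hslice hfiber

end Tensorization

section MultilinearForm

variable {ι α : Type*} [Fintype ι] [Fintype α] [DecidableEq ι]

/-- The multilinear form `∑ i, lam i * z^{(0)}_{i_0} ⋯ z^{(m)}_{i_m}` with coefficients `lam`. -/
noncomputable def multilinearForm (lam : (ι → α) → ℂ) (z : ι → α → ℂ) : ℂ :=
  ∑ i, lam i * ∏ t, z t (i t)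

/-- The supremum norm of a multilinear form on a product of open unit polydiscs. -/
noncomputable def polydiscNorm (lam : (ι → α) → ℂ) : ℝ :=
  sSup {x : ℝ | ∃ z : ι → α → ℂ, (∀ t j, ‖z t j‖ < 1) ∧ x = ‖multilinearForm lam z‖}

lemma continuous_multilinearForm (lam : (ι → α) → ℂ) : Continuous (multilinearForm lam) := by
  unfold multilinearForm
  fun_prop

lemma norm_multilinearForm_le_sum {lam : (ι → α) → ℂ} {z : ι → α → ℂ}
    (hz : ∀ t j, ‖z t j‖ ≤ 1) : ‖multilinearForm lam z‖ ≤ ∑ i, ‖lam i‖ := by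
  refine norm_sum_le_of_le _ fun i _ ↦ ?_
  rw [norm_mul, norm_prod]
  exact mul_le_of_le_one_right (norm_nonneg _)
    (prod_le_one (fun _ _ ↦ norm_nonneg _) fun t _ ↦ hz t (i t))

lemma norm_multilinearForm_le_polydiscNorm (lam : (ι → α) → ℂ) {z : ι → α → ℂ}
    (hz : ∀ t j, ‖z t j‖ ≤ 1) : ‖multilinearForm lam z‖ ≤ polydiscNorm lam := by
  have hbdd : BddAbove {x : ℝ | ∃ z : ι → α → ℂ,
      (∀ t j, ‖z t j‖ < 1) ∧ x = ‖multilinearForm lam z‖} := by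
    refine ⟨∑ i, ‖lam i‖, ?_⟩
    rintro _ ⟨w, hw, rfl⟩
    exact norm_multilinearForm_le_sum fun t j ↦ (hw t j).le
  have hopen : Set.MapsTo (fun w ↦ ‖multilinearForm lam w‖) (ball 0 1)
      (Set.Iic (polydiscNorm lam)) := by
    intro w hw
    simp only [mem_ball_zero_iff, pi_norm_lt_iff one_pos] at hw
    exact le_csSup hbdd ⟨w, hw, rfl⟩
  have hclosed := hopen.closure (continuous_multilinearForm lam).norm
  rw [isClosed_Iic.closure_eq, closure_ball _ one_ne_zero] at hclosed
  exact hclosed (by simpa [pi_norm_le_iff_of_nonneg] using hz)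

end MultilinearForm

section Slice

variable {α : Type*} {m : ℕ}

/-- The subfamily of `lam` with `i_k = v`, indexed by the remaining coordinates. -/
def coordSlice (k : Fin (m + 1)) (v : α) (lam : (Fin (m + 1) → α) → ℂ) (j : Fin m → α) : ℂ :=
  lam (k.insertNth v j)

lemma coordSlice_comp_perm {k : Fin (m + 1)} {lam : (Fin (m + 1) → α) → ℂ}
    (hlam : ∀ i (σ : Equiv.Perm (Fin (m + 1))), σ k = k → lam (i ∘ σ) = lam i) (v : α)
    (j : Fin m → α) (σ : Equiv.Perm (Fin m)) :
    coordSlice k v lam (j ∘ σ) = coordSlice k v lam j := by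
  let τ : Equiv.Perm (Fin (m + 1)) := σ.extendDomain (finSuccAboveEquiv k)
  have hτ : τ k = k := σ.extendDomain_apply_not_subtype _ (by simp)
  have hτσ (t : Fin m) : τ (k.succAbove t) = k.succAbove (σ t) :=
    σ.extendDomain_apply_image (finSuccAboveEquiv k) t
  rw [coordSlice, coordSlice, ← hlam (k.insertNth v j) τ hτ]
  congr 1
  ext t
  cases t using k.succAboveCases <;> simp [hτ, hτσ]

variable [Fintype α]

lemma sum_filter_apply_eq_sum_insertNth [DecidableEq α] {M : Type*} [AddCommMonoid M]
    (k : Fin (m + 1)) (v : α) (F : (Fin (m + 1) → α) → M) :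
    ∑ i with i k = v, F i = ∑ j, F (k.insertNth v j) := by
  rw [sum_filter, ← (Fin.insertNthEquiv (fun _ ↦ α) k).sum_comp, Fintype.sum_prod_type]
  simp [Fin.insertNthEquiv]

lemma multilinearForm_insertNth (lam : (Fin (m + 1) → α) → ℂ) (k : Fin (m + 1))
    (y : α → ℂ) (w : Fin m → α → ℂ) :
    multilinearForm lam (k.insertNth y w) = ∑ v, y v * multilinearForm (coordSlice k v lam) w := by
  rw [multilinearForm, ← (Fin.insertNthEquiv (fun _ ↦ α) k).sum_comp, Fintype.sum_prod_type]
  simp [multilinearForm, coordSlice, Fin.insertNthEquiv, Fin.prod_univ_succAbove _ k, mul_sum,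
    mul_left_comm]

lemma sum_norm_multilinearForm_coordSlice_le (lam : (Fin (m + 1) → α) → ℂ) (k : Fin (m + 1))
    {w : Fin m → α → ℂ} (hw : ∀ t j, ‖w t j‖ ≤ 1) :
    ∑ v, ‖multilinearForm (coordSlice k v lam) w‖ ≤ polydiscNorm lam := by
  choose y hy hyw using fun v ↦
    Complex.exists_norm_eq_mul_self (multilinearForm (coordSlice k v lam) w)
  have hbound (t : Fin (m + 1)) (j : α) :
      ‖(k.insertNth y w : Fin (m + 1) → α → ℂ) t j‖ ≤ 1 := by
    cases t using k.succAboveCases <;> simp [hy, hw]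
  calc ∑ v, ‖multilinearForm (coordSlice k v lam) w‖
      = ‖multilinearForm lam (k.insertNth y w)‖ := by
        simp_rw [multilinearForm_insertNth, ← hyw]
        rw [← Complex.ofReal_sum, Complex.norm_of_nonneg (by positivity)]
    _ ≤ polydiscNorm lam := norm_multilinearForm_le_polydiscNorm lam hbound

end Slice

section MultiIndex

variable {ι α : Type*} [Fintype ι]

/-- The multiplicities `exponent i a = #{t | i t = a}` with which a multi-index takes its values:
the exponent of the monomial `∏ t, z (i t)`, and a complete invariant of the class `[i]`. -/
noncomputable def exponent (i : ι → α) : α →₀ ℕ := ∑ t, Finsupp.single (i t) 1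

lemma exponent_apply [DecidableEq α] (i : ι → α) (a : α) : exponent i a = #{t | i t = a} := by
  simp [exponent, Finsupp.finsetSum_apply, Finsupp.single_apply]

lemma exponent_comp_perm (i : ι → α) (σ : Equiv.Perm ι) : exponent (i ∘ σ) = exponent i :=
  Equiv.sum_comp σ fun t ↦ Finsupp.single (i t) 1

lemma exponent_eq_exponent_iff {i j : ι → α} :
    exponent j = exponent i ↔ ∃ σ : Equiv.Perm ι, j = i ∘ σ := by
  classical
  refine ⟨fun h ↦ ?_, fun ⟨σ, hσ⟩ ↦ hσ ▸ exponent_comp_perm i σ⟩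
  have hcard (a : α) : Fintype.card {t // j t = a} = Fintype.card {t // i t = a} := by
    simpa [exponent_apply, Fintype.card_subtype] using DFunLike.congr_fun h a
  exact ⟨Equiv.ofFiberEquiv fun a ↦ Fintype.equivOfCardEq (hcard a),
    funext fun t ↦ (Equiv.ofFiberEquiv_map _ t).symm⟩

lemma apply_eq_of_exponent_eq {β : Type*} {c : (ι → α) → β}
    (hc : ∀ j (σ : Equiv.Perm ι), c (j ∘ σ) = c j) {i j : ι → α} (h : exponent j = exponent i) :
    c j = c i := by
  obtain ⟨σ, rfl⟩ := exponent_eq_exponent_iff.mp h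
  exact hc i σ

lemma exponent_insertNth {m : ℕ} (k : Fin (m + 1)) (a : α) (j : Fin m → α) :
    exponent (k.insertNth a j : Fin (m + 1) → α) = Finsupp.single a 1 + exponent j := by
  simp [exponent, Fin.sum_univ_succAbove _ k]

lemma classCard_eq_card_exponent_eq {m n : ℕ} (i : Fin m → Fin n) :
    classCard i = #{j : Fin m → Fin n | exponent j = exponent i} := by
  simp only [classCard, ← exponent_eq_exponent_iff, Nat.card_eq_fintype_card, Fintype.card_subtype]

lemma classCard_insertNth_le {m n : ℕ} (k : Fin (m + 1)) (a : Fin n) (j : Fin m → Fin n) :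
    classCard (k.insertNth a j : Fin (m + 1) → Fin n) ≤ (m + 1) * classCard j := by
  simp only [classCard_eq_card_exponent_eq]
  have hsub : ({i | exponent i = exponent (k.insertNth a j : Fin (m + 1) → Fin n)} :
      Finset (Fin (m + 1) → Fin n)) ⊆
      (univ ×ˢ ({j' | exponent j' = exponent j} : Finset (Fin m → Fin n))).image
        fun p : Fin (m + 1) × (Fin m → Fin n) ↦ p.1.insertNth a p.2 := by
    intro i hi
    rw [mem_filter_univ] at hi
    obtain ⟨t, ht⟩ : ∃ t, i t = a := by
      have hpos : exponent i a ≠ 0 := by simp [hi, exponent_insertNth]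
      simpa [exponent_apply, Finset.filter_eq_empty_iff] using hpos
    have hrest : exponent (t.removeNth i) = exponent j := by
      rw [← t.insertNth_self_removeNth i, ht, exponent_insertNth, exponent_insertNth] at hi
      exact add_left_cancel hi
    exact mem_image.mpr ⟨(t, t.removeNth i), by simp [hrest], ht ▸ t.insertNth_self_removeNth i⟩
  exact (card_le_card hsub).trans (card_image_le.trans_eq (by simp))

end MultiIndex

section DiagonalPolynomial

variable {ι α : Type*} [Fintype ι] [Fintype α] [DecidableEq ι]

/-- The restriction to the diagonal of the multilinear form with coefficients `c`, as a homogeneous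
polynomial. -/
noncomputable def diagonalPolynomial (c : (ι → α) → ℂ) : MvPolynomial α ℂ :=
  ∑ j, MvPolynomial.monomial (exponent j) (c j)

lemma eval_diagonalPolynomial (c : (ι → α) → ℂ) (z : α → ℂ) :
    (diagonalPolynomial c).eval z = multilinearForm c fun _ ↦ z := by
  simp only [multilinearForm, diagonalPolynomial, map_sum, MvPolynomial.eval_monomial, exponent]
  refine sum_congr rfl fun j _ ↦ ?_
  rw [← Finsupp.prod_finsetSum_index (by simp) (by simp [pow_add])]
  simp

lemma eval_smul_diagonalPolynomial (c : (ι → α) → ℂ) (r : ℂ) (z : α → ℂ) :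
    (diagonalPolynomial c).eval (r • z) = r ^ Fintype.card ι * (diagonalPolynomial c).eval z := by
  simp only [eval_diagonalPolynomial, multilinearForm, Pi.smul_apply, smul_eq_mul, prod_mul_distrib,
    prod_const, card_univ, mul_sum, mul_left_comm]

lemma coeff_exponent_diagonalPolynomial {m n : ℕ} {c : (Fin m → Fin n) → ℂ}
    (hc : ∀ j (σ : Equiv.Perm (Fin m)), c (j ∘ σ) = c j) (i : Fin m → Fin n) :
    (diagonalPolynomial c).coeff (exponent i) = classCard i * c i := by
  have hconst : ∀ j ∈ ({j | exponent j = exponent i} : Finset (Fin m → Fin n)), c j = c i :=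
    fun j hj ↦ apply_eq_of_exponent_eq hc ((mem_filter_univ j).mp hj)
  simp only [diagonalPolynomial, MvPolynomial.coeff_sum, MvPolynomial.coeff_monomial]
  rw [← sum_filter, sum_congr rfl hconst, sum_const, nsmul_eq_mul, classCard_eq_card_exponent_eq]

lemma sum_norm_coeff_diagonalPolynomial_sq {m n : ℕ} {c : (Fin m → Fin n) → ℂ}
    (hc : ∀ j (σ : Equiv.Perm (Fin m)), c (j ∘ σ) = c j) :
    ∑ α ∈ (diagonalPolynomial c).support, ‖(diagonalPolynomial c).coeff α‖ ^ 2
      = ∑ j, (classCard j : ℝ) * ‖c j‖ ^ 2 := by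
  have hsub : (diagonalPolynomial c).support ⊆ (univ : Finset (Fin m → Fin n)).image exponent := by
    refine MvPolynomial.support_sum.trans (biUnion_subset.mpr fun j _ ↦ ?_)
    exact MvPolynomial.support_monomial_subset.trans (by simp)
  have hfiber (i : Fin m → Fin n) :
      ∑ j : Fin m → Fin n with exponent j = exponent i, (classCard j : ℝ) * ‖c j‖ ^ 2
      = ‖(diagonalPolynomial c).coeff (exponent i)‖ ^ 2 := by
    have hconst : ∀ j ∈ ({j | exponent j = exponent i} : Finset (Fin m → Fin n)),
        (classCard j : ℝ) * ‖c j‖ ^ 2 = classCard i * ‖c i‖ ^ 2 := by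
      intro j hj
      rw [mem_filter_univ] at hj
      rw [apply_eq_of_exponent_eq hc hj, classCard_eq_card_exponent_eq,
        classCard_eq_card_exponent_eq, hj]
    rw [sum_congr rfl hconst, sum_const, ← classCard_eq_card_exponent_eq,
      coeff_exponent_diagonalPolynomial hc, norm_mul, Complex.norm_natCast, nsmul_eq_mul]
    ring
  calc ∑ α ∈ (diagonalPolynomial c).support, ‖(diagonalPolynomial c).coeff α‖ ^ 2
      = ∑ α ∈ (univ : Finset (Fin m → Fin n)).image exponent,
          ‖(diagonalPolynomial c).coeff α‖ ^ 2 :=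
        sum_subset hsub fun α _ hα ↦ by simp [MvPolynomial.notMem_support_iff.mp hα]
    _ = ∑ α ∈ univ.image exponent,
          ∑ j : Fin m → Fin n with exponent j = α, (classCard j : ℝ) * ‖c j‖ ^ 2 := by
        refine sum_congr rfl fun α hα ↦ ?_
        obtain ⟨i, -, rfl⟩ := mem_image.mp hα
        exact (hfiber i).symm
    _ = ∑ j, (classCard j : ℝ) * ‖c j‖ ^ 2 :=
        sum_fiberwise_of_maps_to (fun j hj ↦ mem_image_of_mem _ hj) _

end DiagonalPolynomial

lemma sqrt_sum_classCard_mul_norm_sq_le {m n : ℕ} {c : (Fin m → Fin n) → ℂ}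
    (hc : ∀ j (σ : Equiv.Perm (Fin m)), c (j ∘ σ) = c j) :
    √(∑ j, (classCard j : ℝ) * ‖c j‖ ^ 2)
      ≤ √2 ^ m * ∫ x : UnitAddTorus (Fin n), ‖(diagonalPolynomial c).eval (torusPoint x)‖ := by
  have hr : ‖((√2)⁻¹ : ℂ)‖ = (√2)⁻¹ := by simp
  have h := sqrt_integral_norm_eval_smul_sq_le (diagonalPolynomial c) (r := (√2 : ℂ)⁻¹)
    (by rw [hr, inv_pow, Real.sq_sqrt two_pos.le, one_div])
  simp only [eval_smul_diagonalPolynomial, norm_mul, norm_pow, hr, mul_pow, integral_const_mul,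
    integral_norm_eval_sq, sum_norm_coeff_diagonalPolynomial_sq hc, Fintype.card_fin] at h
  rwa [Real.sqrt_mul (by positivity), Real.sqrt_sq (by positivity), inv_pow,
    inv_mul_le_iff₀ (by positivity)] at h

lemma sqrt_sum_filter_classCard_le {m n : ℕ} (lam : (Fin (m + 1) → Fin n) → ℂ) (k : Fin (m + 1))
    (v : Fin n) :
    √(∑ i with i k = v, (classCard i : ℝ) * ‖lam i‖ ^ 2)
      ≤ √(m + 1) * √(∑ j, (classCard j : ℝ) * ‖coordSlice k v lam j‖ ^ 2) := by
  rw [sum_filter_apply_eq_sum_insertNth, ← Real.sqrt_mul (by positivity), mul_sum]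
  refine Real.sqrt_le_sqrt (sum_le_sum fun j _ ↦ ?_)
  have hcard : (classCard (k.insertNth v j : Fin (m + 1) → Fin n) : ℝ) ≤ (m + 1) * classCard j :=
    mod_cast classCard_insertNth_le k v j
  rw [← mul_assoc]
  exact mul_le_mul_of_nonneg_right hcard (sq_nonneg _)

lemma sum_integral_norm_eval_coordSlice_le {m n : ℕ} (lam : (Fin (m + 1) → Fin n) → ℂ)
    (k : Fin (m + 1)) :
    ∑ v, ∫ x : UnitAddTorus (Fin n), ‖(diagonalPolynomial (coordSlice k v lam)).eval (torusPoint x)‖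
      ≤ polydiscNorm lam := by
  have hcont (v : Fin n) : Continuous fun x : UnitAddTorus (Fin n) ↦
      ‖(diagonalPolynomial (coordSlice k v lam)).eval (torusPoint x)‖ :=
    ((MvPolynomial.continuous_eval _).comp continuous_torusPoint).norm
  rw [← integral_finsetSum _ fun v _ ↦ integrable_of_continuous (hcont v)]
  calc ∫ x : UnitAddTorus (Fin n),
        ∑ v, ‖(diagonalPolynomial (coordSlice k v lam)).eval (torusPoint x)‖
      ≤ ∫ _x : UnitAddTorus (Fin n), polydiscNorm lam := by
        refine integral_mono (integrable_of_continuous (continuous_finsetSum _ fun v _ ↦ hcont v))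
          (integrable_const _) fun x ↦ ?_
        simp only [eval_diagonalPolynomial]
        exact sum_norm_multilinearForm_coordSlice_le lam k fun _ j ↦ (Circle.norm_coe _).le
    _ = polydiscNorm lam := by simp

theorem _root_.symmetric_mixed_norm_estimate_general {m n : ℕ}
    (lam : (Fin (m + 1) → Fin n) → ℂ) (k : Fin (m + 1))
    (hsym : ∀ i (σ : Equiv.Perm (Fin (m + 1))), σ k = k → lam (i ∘ σ) = lam i) :
    ∑ v, √(∑ i with i k = v, (classCard i : ℝ) * ‖lam i‖ ^ 2)
      ≤ √2 ^ m * √(m + 1) * polydiscNorm lam := by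
  let I (v : Fin n) : ℝ :=
    ∫ x : UnitAddTorus (Fin n), ‖(diagonalPolynomial (coordSlice k v lam)).eval (torusPoint x)‖
  calc ∑ v, √(∑ i with i k = v, (classCard i : ℝ) * ‖lam i‖ ^ 2)
      ≤ ∑ v, √(m + 1) * (√2 ^ m * I v) := by
        gcongr with v
        exact (sqrt_sum_filter_classCard_le lam k v).trans <| by
          gcongr; exact sqrt_sum_classCard_mul_norm_sq_le (coordSlice_comp_perm hsym v)
    _ = √2 ^ m * √(m + 1) * ∑ v, I v := by rw [mul_sum]; congr! 1; ring
    _ ≤ √2 ^ m * √(m + 1) * polydiscNorm lam := by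
        gcongr; exact sum_integral_norm_eval_coordSlice_le lam k

end MixedNorm

/-- For a symmetric family `(λ_i)_{i ∈ M(m+1,n)}` and every coordinate `k ∈ {0,…,m}`,
`∑_{i_k=1}^n (∑_{i^k} |i|·|λ_i|²)^{1/2}
  ≤ √2^m · √(m+1) · sup_{z^{(0)},…,z^{(m)} ∈ 𝔻^n} |∑_i λ_i z^{(0)}_{i_0} ⋯ z^{(m)}_{i_m}|`. -/
theorem symmetric_mixed_norm_estimate (m n : ℕ) (hm : 0 < m) (hn : 0 < n)
    (lam : (Fin (m + 1) → Fin n) → ℂ)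
    (hsym : ∀ (i : Fin (m + 1) → Fin n) (σ : Equiv.Perm (Fin (m + 1))),
      lam (i ∘ σ) = lam i)
    (k : Fin (m + 1)) :
    ∑ v : Fin n, Real.sqrt
        (∑ i ∈ Finset.univ.filter (fun i : Fin (m + 1) → Fin n => i k = v),
          (classCard i : ℝ) * ‖lam i‖ ^ 2)
      ≤ Real.sqrt 2 ^ m * Real.sqrt ((m : ℝ) + 1) *
        sSup {x : ℝ | ∃ z : Fin (m + 1) → Fin n → ℂ,
          (∀ t j, ‖z t j‖ < 1) ∧
          x = ‖∑ i : Fin (m + 1) → Fin n, lam i * ∏ t, z t (i t)‖} :=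
  symmetric_mixed_norm_estimate_general lam k fun i σ _ ↦ hsym i σ
end

section
/- Let m, n be positive integers. Suppose r^{(1)}, …, r^{(N)} : M(m,n) → ℂ are symmetric families (i.e. r^{(t)}_i = r^{(t)}_j whenever i and j are permutations of each other) such that for every choice of scalars μ₁,…,μ_N with |μ_t| ≤ 1, sup_{z^{(1)},…,z^{(m)} ∈ 𝔻^n} | ∑_{t=1}^N μ_t ∑_{i ∈ M(m,n)} r^{(t)}_i z^{(1)}_{i_1} ⋯ z^{(m)}_{i_m} | ≤ 1. Then ∑_{t=1}^N ( ∑_{i ∈ M(m,n)} |i| · |r^{(t)}_i|² )^{1/2} ≤ (√2)^m. (The 1-summing norm of the weighted coefficient map I : ⊗^{m,s}_ε ℓ₁^n → ℓ₂(M(m,n)), ∑ r_i e_i ↦ (√|i| r_i)_i, is at most (√2)^m.) -/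
open Finset

/-!
A polynomial `f` in one variable factors as `f = g h` with `|g| = |h|` on the unit circle (Riesz).
The coefficients of `f` are then Cauchy products, so that the Cauchy–Schwarz inequality over the
`k + 1` terms of the `k`-th one and Bessel's inequality for `g` and `h` give Carleman's inequality
`∑ₖ |aₖ|² / (k + 1) ≤ ‖f‖₁²`. By Minkowski's inequality it extends to `ℓ₂`-valued polynomials and
can be iterated one variable at a time; since `‖·‖₁` is an average, a pointwise bound on the torus
for the sum over `t` of the `ℓ₂`-norms survives each iteration. Finally, for symmetric `r` the
polynomial `∑ᵢ rᵢ z^{α(i)}` has coefficient `|i| rᵢ` at `α(i)`, so that `∑ᵢ |i| |rᵢ|²` is the sum of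
the squared moduli of its coefficients, and `∏ⱼ (αⱼ + 1) ≤ ∏ⱼ 2^{αⱼ} = 2^m`.
-/

section TaylorCoefficients

open Metric Real
open scoped Nat

/-- The `k`-th Taylor coefficient of `f` at the origin. -/
noncomputable def taylorCoeff (f : ℂ → ℂ) (k : ℕ) : ℂ :=
  iteratedDeriv k f 0 / k !

theorem taylorCoeff_congr {f g : ℂ → ℂ} (hfg : f =ᶠ[nhds 0] g) (k : ℕ) :
    taylorCoeff f k = taylorCoeff g k := by
  rw [taylorCoeff, hfg.iteratedDeriv_eq, taylorCoeff]

theorem taylorCoeff_mul {f g : ℂ → ℂ} (hf : AnalyticAt ℂ f 0) (hg : AnalyticAt ℂ g 0) (k : ℕ) :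
    taylorCoeff (f * g) k =
      ∑ p ∈ antidiagonal k, taylorCoeff f p.1 * taylorCoeff g p.2 := by
  simp only [taylorCoeff, iteratedDeriv_mul hf.contDiffAt hg.contDiffAt, sum_div,
    Finset.Nat.sum_antidiagonal_eq_sum_range_succ_mk]
  refine sum_congr rfl fun j hj ↦ ?_
  rw [Nat.cast_choose _ (mem_range_succ_iff.mp hj)]
  field_simp [Nat.factorial_ne_zero]

theorem iteratedDeriv_polynomial_eval {𝕜 : Type*} [NontriviallyNormedField 𝕜]
    (p : Polynomial 𝕜) (k : ℕ) :
    iteratedDeriv k (fun z ↦ p.eval z) = fun z ↦ (Polynomial.derivative^[k] p).eval z := by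
  induction k with
  | zero => simp
  | succ k ih =>
    ext z
    rw [iteratedDeriv_succ, ih, Polynomial.deriv, Function.iterate_succ_apply']

theorem taylorCoeff_polynomial_eval (p : Polynomial ℂ) (k : ℕ) :
    taylorCoeff (fun z ↦ p.eval z) k = p.coeff k := by
  simp only [taylorCoeff, iteratedDeriv_polynomial_eval]
  rw [← Polynomial.coeff_zero_eq_eval_zero, Polynomial.coeff_iterate_derivative, zero_add,
    Nat.descFactorial_self, nsmul_eq_mul]
  field_simp [Nat.factorial_ne_zero]

theorem taylorCoeff_eq_circleAverage {f : ℂ → ℂ} (hf : DiffContOnCl ℂ f (ball 0 1)) (k : ℕ) :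
    taylorCoeff f k = circleAverage (fun z ↦ z⁻¹ ^ k * f z) 0 1 := by
  have cauchy := hf.circleIntegral_one_div_sub_center_pow_smul one_pos k
  have integrand (z : ℂ) :
      (z - 0)⁻¹ • (z⁻¹ ^ k * f z) = (1 / (z - 0) ^ (k + 1)) • f z := by
    simp only [sub_zero, smul_eq_mul, one_div, ← inv_pow]
    ring
  rw [circleAverage_eq_circleIntegral one_ne_zero]
  simp only [integrand]
  rw [cauchy, taylorCoeff]
  simp only [smul_eq_mul]
  field_simp [Complex.I_ne_zero]

theorem fourierCoeffOn_circleMap (f : ℂ → ℂ) (k : ℤ) :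
    fourierCoeffOn two_pi_pos (fun θ ↦ f (circleMap 0 1 θ)) k =
      circleAverage (fun z ↦ z ^ (-k) * f z) 0 1 := by
  have exp_eq (θ : ℝ) : fourier (-k) (θ : AddCircle (2 * π - 0)) = circleMap 0 1 θ ^ (-k) := by
    rw [fourier_coe_apply, circleMap_zero, Complex.ofReal_one, one_mul, ← Complex.exp_int_mul]
    congr 1
    push_cast
    field_simp [pi_ne_zero]
    simp only [sub_zero]
    ring
  simp only [fourierCoeffOn_eq_integral, circleAverage_def, exp_eq, smul_eq_mul, sub_zero, one_div]

theorem sum_norm_taylorCoeff_sq_le_circleAverage {f : ℂ → ℂ}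
    (hf : DiffContOnCl ℂ f (ball 0 1)) (A : Finset ℕ) :
    ∑ k ∈ A, ‖taylorCoeff f k‖ ^ 2 ≤ circleAverage (fun z ↦ ‖f z‖ ^ 2) 0 1 := by
  have continuous_boundary : Continuous fun θ ↦ f (circleMap 0 1 θ) :=
    hf.continuousOn_ball.comp_continuous (continuous_circleMap 0 1)
      fun θ ↦ circleMap_mem_closedBall 0 zero_le_one θ
  have memLp : MeasureTheory.MemLp (fun θ ↦ f (circleMap 0 1 θ)) 2
      (MeasureTheory.volume.restrict (Set.Ioc 0 (2 * π))) :=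
    (MeasureTheory.memLp_two_iff_integrable_sq_norm continuous_boundary.aestronglyMeasurable).2
      (continuous_boundary.norm.pow 2).integrableOn_Ioc
  have parseval := hasSum_sq_fourierCoeffOn two_pi_pos memLp
  have coeff_eq (k : ℕ) :
      taylorCoeff f k = fourierCoeffOn two_pi_pos (fun θ ↦ f (circleMap 0 1 θ)) k := by
    simp only [taylorCoeff_eq_circleAverage hf, fourierCoeffOn_circleMap, zpow_neg, zpow_natCast,
      inv_pow]
  calc ∑ k ∈ A, ‖taylorCoeff f k‖ ^ 2
      = ∑ k ∈ A.map Nat.castEmbedding,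
          ‖fourierCoeffOn two_pi_pos (fun θ ↦ f (circleMap 0 1 θ)) k‖ ^ 2 := by
        simp only [sum_map, coeff_eq, Nat.castEmbedding_apply]
    _ ≤ (2 * π - 0)⁻¹ • ∫ θ in 0..2 * π, ‖f (circleMap 0 1 θ)‖ ^ 2 :=
        sum_le_hasSum _ (fun _ _ ↦ by positivity) parseval
    _ = circleAverage (fun z ↦ ‖f z‖ ^ 2) 0 1 := by rw [sub_zero, circleAverage_def]

end TaylorCoefficients

section RieszFactorization

open Metric Real

/-- A factorization `f = g * h` on the closed unit disc into disc-algebra functions with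
`‖g‖ = ‖h‖` on the unit circle, so that `‖g‖ ^ 2 = ‖h‖ ^ 2 = ‖f‖` there. -/
structure IsRieszFactorization (f g h : ℂ → ℂ) : Prop where
  diffContOnCl_left : DiffContOnCl ℂ g (ball 0 1)
  diffContOnCl_right : DiffContOnCl ℂ h (ball 0 1)
  eqOn : Set.EqOn f (g * h) (closedBall 0 1)
  norm_eq_norm : ∀ z ∈ sphere (0 : ℂ) 1, ‖g z‖ = ‖h z‖

namespace IsRieszFactorization

variable {f f₁ f₂ g g₁ g₂ h h₁ h₂ : ℂ → ℂ}

theorem norm_sq_left (hf : IsRieszFactorization f g h) {z : ℂ} (hz : z ∈ sphere (0 : ℂ) 1) :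
    ‖g z‖ ^ 2 = ‖f z‖ := by
  rw [hf.eqOn (sphere_subset_closedBall hz), Pi.mul_apply, norm_mul, ← hf.norm_eq_norm z hz, sq]

theorem norm_sq_right (hf : IsRieszFactorization f g h) {z : ℂ} (hz : z ∈ sphere (0 : ℂ) 1) :
    ‖h z‖ ^ 2 = ‖f z‖ := by
  rw [← hf.norm_eq_norm z hz, hf.norm_sq_left hz]

theorem of_sq (hg : DiffContOnCl ℂ g (ball 0 1)) (hf : Set.EqOn f (g ^ 2) (closedBall 0 1)) :
    IsRieszFactorization f g g :=
  ⟨hg, hg, by rwa [← sq], fun _ _ ↦ rfl⟩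

theorem mul (hf₁ : IsRieszFactorization f₁ g₁ h₁) (hf₂ : IsRieszFactorization f₂ g₂ h₂) :
    IsRieszFactorization (f₁ * f₂) (g₁ * g₂) (h₁ * h₂) where
  diffContOnCl_left := hf₁.diffContOnCl_left.smul hf₂.diffContOnCl_left
  diffContOnCl_right := hf₁.diffContOnCl_right.smul hf₂.diffContOnCl_right
  eqOn z hz := by
    simp only [Pi.mul_apply, hf₁.eqOn hz, hf₂.eqOn hz]
    ring
  norm_eq_norm z hz := by
    simp only [Pi.mul_apply, norm_mul, hf₁.norm_eq_norm z hz, hf₂.norm_eq_norm z hz]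

theorem taylorCoeff_eq (hf : IsRieszFactorization f g h) (k : ℕ) :
    taylorCoeff f k = ∑ p ∈ antidiagonal k, taylorCoeff g p.1 * taylorCoeff h p.2 := by
  have ball_mem : ball (0 : ℂ) 1 ∈ nhds 0 := ball_mem_nhds 0 one_pos
  have near_zero : f =ᶠ[nhds 0] g * h :=
    Filter.eventually_of_mem ball_mem fun _ hz ↦ hf.eqOn (ball_subset_closedBall hz)
  rw [taylorCoeff_congr near_zero,
    taylorCoeff_mul (hf.diffContOnCl_left.differentiableOn.analyticAt ball_mem)
      (hf.diffContOnCl_right.differentiableOn.analyticAt ball_mem)]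

end IsRieszFactorization

theorem sum_range_sum_antidiagonal_mul_le {R : Type*} [CommSemiring R] [PartialOrder R]
    [IsOrderedRing R] {u v : ℕ → R} (hu : 0 ≤ u) (hv : 0 ≤ v) (K : ℕ) :
    ∑ k ∈ range K, ∑ p ∈ antidiagonal k, u p.1 * v p.2 ≤
      (∑ k ∈ range K, u k) * ∑ k ∈ range K, v k := by
  have fiber_eq {k : ℕ} (hk : k ∈ range K) :
      {p ∈ range K ×ˢ range K | p.1 + p.2 = k} = antidiagonal k := by
    ext p
    simp only [mem_filter, mem_product, mem_range, HasAntidiagonal.mem_antidiagonal] at hk ⊢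
    lia
  calc ∑ k ∈ range K, ∑ p ∈ antidiagonal k, u p.1 * v p.2
      = ∑ k ∈ range K, ∑ p ∈ range K ×ˢ range K with p.1 + p.2 = k, u p.1 * v p.2 :=
        sum_congr rfl fun k hk ↦ by rw [fiber_eq hk]
    _ ≤ ∑ p ∈ range K ×ˢ range K, u p.1 * v p.2 :=
        sum_fiberwise_le_sum_of_sum_fiber_nonneg fun _ _ ↦
          sum_nonneg fun p _ ↦ mul_nonneg (hu p.1) (hv p.2)
    _ = (∑ k ∈ range K, u k) * ∑ k ∈ range K, v k := by rw [sum_product, sum_mul_sum]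

theorem norm_sum_antidiagonal_sq_div_le {R : Type*} [SeminormedRing R] (u v : ℕ → R) (k : ℕ) :
    ‖∑ p ∈ antidiagonal k, u p.1 * v p.2‖ ^ 2 / (k + 1) ≤
      ∑ p ∈ antidiagonal k, ‖u p.1‖ ^ 2 * ‖v p.2‖ ^ 2 := by
  rw [div_le_iff₀' (by positivity)]
  calc ‖∑ p ∈ antidiagonal k, u p.1 * v p.2‖ ^ 2
      ≤ (∑ p ∈ antidiagonal k, ‖u p.1‖ * ‖v p.2‖) ^ 2 := by
        gcongr
        exact norm_sum_le_of_le _ fun p _ ↦ norm_mul_le _ _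
    _ ≤ #(antidiagonal k) * ∑ p ∈ antidiagonal k, (‖u p.1‖ * ‖v p.2‖) ^ 2 :=
        sq_sum_le_card_mul_sum_sq
    _ = (k + 1) * ∑ p ∈ antidiagonal k, ‖u p.1‖ ^ 2 * ‖v p.2‖ ^ 2 := by
        simp only [Finset.Nat.card_antidiagonal, Nat.cast_add, Nat.cast_one, mul_pow]

theorem IsRieszFactorization.sum_norm_taylorCoeff_sq_div_le {f g h : ℂ → ℂ}
    (hf : IsRieszFactorization f g h) (A : Finset ℕ) :
    ∑ k ∈ A, ‖taylorCoeff f k‖ ^ 2 / (k + 1) ≤ circleAverage (fun z ↦ ‖f z‖) 0 1 ^ 2 := by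
  obtain ⟨K, hAK⟩ := A.exists_nat_subset_range
  have left_le : ∑ k ∈ range K, ‖taylorCoeff g k‖ ^ 2 ≤ circleAverage (fun z ↦ ‖f z‖) 0 1 :=
    (sum_norm_taylorCoeff_sq_le_circleAverage hf.diffContOnCl_left _).trans_eq <|
      circleAverage_congr_sphere fun z hz ↦ hf.norm_sq_left (by rwa [abs_one] at hz)
  have right_le : ∑ k ∈ range K, ‖taylorCoeff h k‖ ^ 2 ≤ circleAverage (fun z ↦ ‖f z‖) 0 1 :=
    (sum_norm_taylorCoeff_sq_le_circleAverage hf.diffContOnCl_right _).trans_eq <|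
      circleAverage_congr_sphere fun z hz ↦ hf.norm_sq_right (by rwa [abs_one] at hz)
  calc ∑ k ∈ A, ‖taylorCoeff f k‖ ^ 2 / (k + 1)
      ≤ ∑ k ∈ range K, ‖taylorCoeff f k‖ ^ 2 / (k + 1) :=
        sum_le_sum_of_subset_of_nonneg hAK fun _ _ _ ↦ by positivity
    _ ≤ ∑ k ∈ range K, ∑ p ∈ antidiagonal k, ‖taylorCoeff g p.1‖ ^ 2 * ‖taylorCoeff h p.2‖ ^ 2 :=
        sum_le_sum fun k _ ↦ by
          rw [hf.taylorCoeff_eq]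
          exact norm_sum_antidiagonal_sq_div_le _ _ k
    _ ≤ (∑ k ∈ range K, ‖taylorCoeff g k‖ ^ 2) * ∑ k ∈ range K, ‖taylorCoeff h k‖ ^ 2 :=
        sum_range_sum_antidiagonal_mul_le (u := fun k ↦ ‖taylorCoeff g k‖ ^ 2)
          (v := fun k ↦ ‖taylorCoeff h k‖ ^ 2) (fun _ ↦ sq_nonneg _) (fun _ ↦ sq_nonneg _) K
    _ ≤ circleAverage (fun z ↦ ‖f z‖) 0 1 ^ 2 := by
        rw [sq]
        gcongr
        exact (sum_nonneg fun _ _ ↦ sq_nonneg _).trans left_le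

theorem one_sub_norm_le_re_one_sub (w : ℂ) : 1 - ‖w‖ ≤ (1 - w).re := by
  rw [Complex.sub_re, Complex.one_re]
  exact sub_le_sub_left (Complex.re_le_norm w) 1

theorem diffContOnCl_one_sub_mul_cpow {b c : ℂ} (hb : ‖b‖ ≤ 1) (hc : 0 < c.re) :
    DiffContOnCl ℂ (fun z ↦ (1 - b * z) ^ c) (ball 0 1) := by
  have norm_mul_le_norm (z : ℂ) : ‖b * z‖ ≤ ‖z‖ :=
    (norm_mul b z).trans_le (mul_le_of_le_one_left (norm_nonneg z) hb)
  have re_ge (z : ℂ) : 1 - ‖z‖ ≤ (1 - b * z).re :=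
    (sub_le_sub_left (norm_mul_le_norm z) 1).trans (one_sub_norm_le_re_one_sub _)
  refine .mk_ball (fun z hz ↦ ?_) fun z hz ↦ ?_
  · have base_diff : DifferentiableAt ℂ (fun z ↦ 1 - b * z) z := by fun_prop
    have re_pos : 0 < (1 - b * z).re := (sub_pos.2 (mem_ball_zero_iff.1 hz)).trans_le (re_ge z)
    exact (base_diff.cpow_const (.inl re_pos)).differentiableWithinAt
  · have base_cont : ContinuousAt (fun z ↦ 1 - b * z) z := by fun_prop
    have re_nonneg : 0 ≤ (1 - b * z).re :=
      (sub_nonneg.2 (mem_closedBall_zero_iff.1 hz)).trans (re_ge z)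
    exact (ContinuousAt.comp (f := fun z ↦ 1 - b * z)
      (Complex.continuousAt_cpow_const_of_re_pos (.inl re_nonneg) hc)
      base_cont).continuousWithinAt

theorem exists_isRieszFactorization_const (c : ℂ) :
    ∃ g h, IsRieszFactorization (fun _ ↦ c) g h := by
  obtain ⟨d, hd⟩ := IsAlgClosed.exists_pow_nat_eq c two_pos
  exact ⟨_, _, .of_sq (g := fun _ ↦ d) diffContOnCl_const fun _ _ ↦ hd.symm⟩

theorem exists_isRieszFactorization_one_sub_mul {b : ℂ} (hb : ‖b‖ ≤ 1) :
    ∃ g h, IsRieszFactorization (fun z ↦ 1 - b * z) g h := by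
  refine ⟨_, _, .of_sq (diffContOnCl_one_sub_mul_cpow (c := 1 / 2) hb (by norm_num)) ?_⟩
  intro z _
  simp [← Complex.cpow_nat_mul]

theorem norm_sub_eq_norm_one_sub_conj_mul (a : ℂ) {z : ℂ} (hz : ‖z‖ = 1) :
    ‖z - a‖ = ‖1 - (starRingEnd ℂ) a * z‖ := by
  have conj_mul_self : (starRingEnd ℂ) z * z = 1 := by
    rw [Complex.conj_mul', hz, Complex.ofReal_one, one_pow]
  calc ‖z - a‖ = ‖(starRingEnd ℂ) (z - a)‖ * ‖z‖ := by rw [Complex.norm_conj, hz, mul_one]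
    _ = ‖1 - (starRingEnd ℂ) a * z‖ := by rw [← norm_mul, map_sub, sub_mul, conj_mul_self]

theorem exists_isRieszFactorization_sub_of_norm_lt_one {a : ℂ} (ha : ‖a‖ < 1) :
    ∃ g h, IsRieszFactorization (fun z ↦ z - a) g h := by
  -- Take `h = √(1 - āz)` and `g = (z - a) / h`: on the circle `|z - a| = |1 - āz| = |h| ^ 2`.
  have norm_conj_mul_lt {z : ℂ} (hz : z ∈ closedBall (0 : ℂ) 1) : ‖(starRingEnd ℂ) a * z‖ < 1 := by
    rw [norm_mul, Complex.norm_conj]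
    exact mul_lt_one_of_nonneg_of_lt_one_left (norm_nonneg a) ha (by simpa using hz)
  set h : ℂ → ℂ := fun z ↦ (1 - (starRingEnd ℂ) a * z) ^ (1 / 2 : ℂ) with h_eq
  have h_diff : DiffContOnCl ℂ h (ball 0 1) :=
    diffContOnCl_one_sub_mul_cpow (by simpa using ha.le) (by norm_num)
  have h_sq (z : ℂ) : h z ^ 2 = 1 - (starRingEnd ℂ) a * z := by simp [h_eq, ← Complex.cpow_nat_mul]
  have h_ne_zero {z : ℂ} (hz : z ∈ closedBall (0 : ℂ) 1) : h z ≠ 0 := by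
    rw [← pow_ne_zero_iff two_ne_zero, h_sq]
    exact Complex.ne_zero_of_re_pos <|
      (sub_pos.2 (norm_conj_mul_lt hz)).trans_le (one_sub_norm_le_re_one_sub _)
  refine ⟨fun z ↦ h⁻¹ z * (z - a), h, ?_, h_diff, fun z hz ↦ ?_, fun z hz ↦ ?_⟩
  · refine (h_diff.inv fun z hz ↦ h_ne_zero ?_).smul (Differentiable.diffContOnCl (by fun_prop))
    rwa [closure_ball _ one_ne_zero] at hz
  · have := h_ne_zero hz
    simp only [Pi.mul_apply, Pi.inv_apply]
    field_simp
  · have := h_ne_zero (sphere_subset_closedBall hz)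
    rw [Pi.inv_apply, norm_mul, norm_inv, norm_sub_eq_norm_one_sub_conj_mul a (by simpa using hz),
      ← h_sq, norm_pow, sq, inv_mul_cancel_left₀ (norm_ne_zero_iff.2 this)]

theorem exists_isRieszFactorization_sub (a : ℂ) :
    ∃ g h, IsRieszFactorization (fun z ↦ z - a) g h := by
  obtain ha | ha := lt_or_ge ‖a‖ 1
  · exact exists_isRieszFactorization_sub_of_norm_lt_one ha
  have a_ne_zero : a ≠ 0 := norm_pos_iff.1 (one_pos.trans_le ha)
  obtain ⟨g₁, h₁, const⟩ := exists_isRieszFactorization_const (-a)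
  obtain ⟨g₂, h₂, linear⟩ := exists_isRieszFactorization_one_sub_mul (b := a⁻¹) <| by
    rw [norm_inv]
    exact inv_le_one_of_one_le₀ ha
  have factor_eq : (fun z ↦ z - a) = (fun _ ↦ -a) * fun z ↦ 1 - a⁻¹ * z := by
    ext z
    simp only [Pi.mul_apply]
    field_simp
    ring
  exact factor_eq ▸ ⟨_, _, const.mul linear⟩

theorem exists_isRieszFactorization_polynomial (p : Polynomial ℂ) :
    ∃ g h, IsRieszFactorization (fun z ↦ p.eval z) g h := by
  have split (z : ℂ) : p.eval z = p.leadingCoeff * (p.roots.map fun a ↦ z - a).prod := by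
    conv_lhs => rw [(IsAlgClosed.splits p).eq_prod_roots]
    simp [Polynomial.eval_multiset_prod, Multiset.map_map]
  simp only [split]
  induction p.roots using Multiset.induction with
  | empty => simpa using exists_isRieszFactorization_const p.leadingCoeff
  | cons a s ih =>
    obtain ⟨g, h, hs⟩ := ih
    obtain ⟨g₁, h₁, ha⟩ := exists_isRieszFactorization_sub a
    have cons_eq : (fun z ↦ p.leadingCoeff * ((a ::ₘ s).map fun a ↦ z - a).prod) =
        (fun z ↦ z - a) * fun z ↦ p.leadingCoeff * (s.map fun a ↦ z - a).prod := by
      ext z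
      simp only [Multiset.map_cons, Multiset.prod_cons, Pi.mul_apply]
      ring
    exact cons_eq ▸ ⟨_, _, ha.mul hs⟩

theorem sum_norm_coeff_sq_div_le (p : Polynomial ℂ) (A : Finset ℕ) :
    ∑ k ∈ A, ‖p.coeff k‖ ^ 2 / (k + 1) ≤ circleAverage (fun z ↦ ‖p.eval z‖) 0 1 ^ 2 := by
  obtain ⟨g, h, hp⟩ := exists_isRieszFactorization_polynomial p
  simpa only [taylorCoeff_polynomial_eval] using hp.sum_norm_taylorCoeff_sq_div_le A

end RieszFactorization

section IteratedCarleman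

open Metric Real

theorem norm_circleAverage_le_circleAverage_norm {E : Type*} [NormedAddCommGroup E]
    [NormedSpace ℝ E] (f : ℂ → E) (c : ℂ) (R : ℝ) :
    ‖circleAverage f c R‖ ≤ circleAverage (fun z ↦ ‖f z‖) c R := by
  rw [circleAverage, circleAverage, norm_smul, norm_of_nonneg (by positivity), smul_eq_mul]
  gcongr
  exact intervalIntegral.norm_integral_le_integral_norm two_pi_pos.le

theorem sqrt_sum_circleAverage_sq_le {ι : Type*} [Fintype ι] {F : ι → ℂ → ℝ} {c : ℂ} {R : ℝ}
    (hF : ∀ i, CircleIntegrable (F i) c R) :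
    √(∑ i, circleAverage (F i) c R ^ 2) ≤ circleAverage (fun z ↦ √(∑ i, F i z ^ 2)) c R := by
  let f : ℂ → EuclideanSpace ℝ ι := fun z ↦ WithLp.toLp 2 fun i ↦ F i z
  have f_int : CircleIntegrable f c R := by
    rw [CircleIntegrable, intervalIntegrable_iff, MeasureTheory.IntegrableOn]
    exact MeasureTheory.Integrable.of_eval_piLp fun i ↦ intervalIntegrable_iff.1 (hF i)
  have average_apply (i : ι) : circleAverage f c R i = circleAverage (F i) c R :=
    ((EuclideanSpace.proj i : _ →L[ℝ] ℝ).circleAverage_comp_comm f_int).symm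
  have norm_eq (v : EuclideanSpace ℝ ι) : ‖v‖ = √(∑ i, v i ^ 2) := by
    simp only [EuclideanSpace.norm_eq, norm_eq_abs, sq_abs]
  simpa only [norm_eq, average_apply] using norm_circleAverage_le_circleAverage_norm f c R

theorem sum_sqrt_sum_norm_coeff_sq_div_le {τ β : Type*} [Fintype τ] [Fintype β]
    (p : τ → β → Polynomial ℂ) (A : Finset ℕ) {C : ℝ}
    (hp : ∀ z : ℂ, ‖z‖ = 1 → ∑ t, √(∑ b, ‖(p t b).eval z‖ ^ 2) ≤ C) :
    ∑ t, √(∑ b, ∑ k ∈ A, ‖(p t b).coeff k‖ ^ 2 / (k + 1)) ≤ C := by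
  have continuous_sqrt_sum (t : τ) : Continuous fun z ↦ √(∑ b, ‖(p t b).eval z‖ ^ 2) := by
    fun_prop
  have integrable (f : ℂ → ℝ) (hf : Continuous f) : CircleIntegrable f 0 1 :=
    hf.continuousOn.circleIntegrable zero_le_one
  calc ∑ t, √(∑ b, ∑ k ∈ A, ‖(p t b).coeff k‖ ^ 2 / (k + 1))
      ≤ ∑ t, √(∑ b, circleAverage (fun z ↦ ‖(p t b).eval z‖) 0 1 ^ 2) := by
        gcongr
        exact sum_norm_coeff_sq_div_le _ A
    _ ≤ ∑ t, circleAverage (fun z ↦ √(∑ b, ‖(p t b).eval z‖ ^ 2)) 0 1 :=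
        sum_le_sum fun t _ ↦ sqrt_sum_circleAverage_sq_le fun b ↦ integrable _ (by fun_prop)
    _ = circleAverage (fun z ↦ ∑ t, √(∑ b, ‖(p t b).eval z‖ ^ 2)) 0 1 :=
        (circleAverage_fun_sum fun t _ ↦ integrable _ (continuous_sqrt_sum t)).symm
    _ ≤ C := circleAverage_mono_on_of_le_circle (integrable _ (by fun_prop)) fun z hz ↦
        hp z (by simpa using hz)

theorem sum_le_sum_image_zero_sum_image_tail_cons {n : ℕ} {N M : Type*} [Zero N] [DecidableEq N]
    [AddCommMonoid M] [PartialOrder M] [IsOrderedAddMonoid M] {f : (Fin (n + 1) →₀ N) → M}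
    (hf : 0 ≤ f) (S : Finset (Fin (n + 1) →₀ N)) :
    ∑ α ∈ S, f α ≤
      ∑ k ∈ S.image fun α ↦ α 0, ∑ α ∈ S.image Finsupp.tail, f (Finsupp.cons k α) := by
  rw [← sum_product', ← sum_image (f := f) (g := fun q : N × (Fin n →₀ N) ↦ Finsupp.cons q.1 q.2)]
  · refine sum_le_sum_of_subset_of_nonneg (fun α hα ↦ ?_) fun α _ _ ↦ hf α
    exact mem_image.2 ⟨(α 0, Finsupp.tail α),
      mk_mem_product (mem_image_of_mem _ hα) (mem_image_of_mem _ hα), Finsupp.cons_tail α⟩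
  · exact (Finsupp.cons_injective2.uncurry).injOn

/-- The coefficient of `X 0 ^ k` in `P`, a polynomial in the other variables, divided by `√(k + 1)`
so that its squared norms carry the weight `1 / (k + 1)` of Carleman's inequality. -/
noncomputable def weightedSlice {n : ℕ} (P : MvPolynomial (Fin (n + 1)) ℂ) (k : ℕ) :
    MvPolynomial (Fin n) ℂ :=
  MvPolynomial.C ((√(k + 1))⁻¹ : ℂ) * (MvPolynomial.finSuccEquiv ℂ n P).coeff k

theorem norm_inv_sqrt_mul_sq {c : ℝ} (hc : 0 ≤ c) (w : ℂ) :
    ‖((√c)⁻¹ : ℂ) * w‖ ^ 2 = ‖w‖ ^ 2 / c := by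
  rw [norm_mul, norm_inv, Complex.norm_real, norm_of_nonneg (sqrt_nonneg _), mul_pow, inv_pow,
    sq_sqrt hc, inv_mul_eq_div]

theorem norm_eval_weightedSlice_sq {n : ℕ} (P : MvPolynomial (Fin (n + 1)) ℂ) (k : ℕ)
    (z : Fin n → ℂ) :
    ‖MvPolynomial.eval z (weightedSlice P k)‖ ^ 2 =
      ‖((MvPolynomial.finSuccEquiv ℂ n P).map (MvPolynomial.eval z)).coeff k‖ ^ 2 / (k + 1) := by
  rw [weightedSlice, map_mul, MvPolynomial.eval_C, norm_inv_sqrt_mul_sq (by positivity),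
    Polynomial.coeff_map]

theorem norm_coeff_weightedSlice_sq_div {n : ℕ} (P : MvPolynomial (Fin (n + 1)) ℂ) (k : ℕ)
    (α : Fin n →₀ ℕ) :
    ‖(weightedSlice P k).coeff α‖ ^ 2 / ∏ j, ((α j : ℝ) + 1) =
      ‖P.coeff (Finsupp.cons k α)‖ ^ 2 / ∏ j, ((Finsupp.cons k α j : ℝ) + 1) := by
  rw [weightedSlice, MvPolynomial.coeff_C_mul, norm_inv_sqrt_mul_sq (by positivity),
    MvPolynomial.finSuccEquiv_coeff_coeff, Fin.prod_univ_succ, div_div]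
  simp only [Finsupp.cons_zero, Finsupp.cons_succ]

theorem sum_sqrt_sum_norm_eval_weightedSlice_sq_le {n : ℕ} {τ β : Type*} [Fintype τ] [Fintype β]
    (P : τ → β → MvPolynomial (Fin (n + 1)) ℂ) (A : Finset ℕ) {C : ℝ}
    (hP : ∀ z : Fin (n + 1) → ℂ, (∀ j, ‖z j‖ = 1) →
      ∑ t, √(∑ b, ‖MvPolynomial.eval z (P t b)‖ ^ 2) ≤ C)
    {z : Fin n → ℂ} (hz : ∀ j, ‖z j‖ = 1) :
    ∑ t, √(∑ q : β × A, ‖MvPolynomial.eval z (weightedSlice (P t q.1) q.2)‖ ^ 2) ≤ C := by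
  simp only [Fintype.sum_prod_type, norm_eval_weightedSlice_sq]
  simp_rw [fun (t : τ) (b : β) ↦ A.sum_coe_sort fun k ↦ ‖((MvPolynomial.finSuccEquiv ℂ n
    (P t b)).map (MvPolynomial.eval z)).coeff k‖ ^ 2 / ((k : ℝ) + 1)]
  refine sum_sqrt_sum_norm_coeff_sq_div_le _ A fun w hw ↦ ?_
  simpa only [MvPolynomial.eval_eq_eval_mv_eval'] using hP (Fin.cons w z) (Fin.cases hw hz)

theorem sum_sqrt_sum_norm_mvPolynomial_coeff_sq_div_le {n : ℕ} {τ β : Type*} [Fintype τ]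
    [Fintype β] (P : τ → β → MvPolynomial (Fin n) ℂ) (S : Finset (Fin n →₀ ℕ)) {C : ℝ}
    (hP : ∀ z : Fin n → ℂ, (∀ j, ‖z j‖ = 1) →
      ∑ t, √(∑ b, ‖MvPolynomial.eval z (P t b)‖ ^ 2) ≤ C) :
    ∑ t, √(∑ b, ∑ α ∈ S, ‖(P t b).coeff α‖ ^ 2 / ∏ j, ((α j : ℝ) + 1)) ≤ C := by
  induction n generalizing β with
  | zero =>
    have coeff_zero_eq_eval (t : τ) (b : β) :
        (P t b).coeff 0 = MvPolynomial.eval (0 : Fin 0 → ℂ) (P t b) := by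
      rw [MvPolynomial.eval_zero, MvPolynomial.constantCoeff_eq]
    refine le_trans ?_ (hP 0 finZeroElim)
    gcongr with t _ b
    rw [← coeff_zero_eq_eval]
    refine (sum_le_univ_sum_of_nonneg fun α ↦ by positivity).trans_eq ?_
    simp
  | succ n ih =>
    set A := S.image fun α ↦ α 0
    refine le_trans ?_ (ih (fun t (q : β × A) ↦ weightedSlice (P t q.1) q.2) (S.image Finsupp.tail)
      fun z hz ↦ sum_sqrt_sum_norm_eval_weightedSlice_sq_le P A hP hz)
    simp only [Fintype.sum_prod_type, norm_coeff_weightedSlice_sq_div]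
    gcongr with t _ b
    refine (sum_le_sum_image_zero_sum_image_tail_cons (fun α ↦ by positivity) S).trans_eq ?_
    exact (A.sum_coe_sort _).symm

end IteratedCarleman

section MultiIndices

variable {κ σ : Type*} [Fintype κ]

/-- The exponent `α` of the monomial `∏ k, z (i k) = z ^ α` attached to the multi-index `i`. -/
noncomputable def exponent (i : κ → σ) : σ →₀ ℕ :=
  ∑ k, Finsupp.single (i k) 1

theorem exponent_apply [DecidableEq σ] (i : κ → σ) (j : σ) : exponent i j = #{k | i k = j} := by
  simp [exponent, Finsupp.single_apply]

theorem exponent_eq_iff {i i' : κ → σ} :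
    exponent i = exponent i' ↔ ∃ e : Equiv.Perm κ, i = i' ∘ e := by
  classical
  refine ⟨fun h ↦ ?_, ?_⟩
  · have card_fiber_eq (j : σ) : Fintype.card {k // i k = j} = Fintype.card {k // i' k = j} := by
      simpa only [Fintype.card_subtype, exponent_apply] using DFunLike.congr_fun h j
    exact ⟨.ofFiberEquiv fun j ↦ Fintype.equivOfCardEq (card_fiber_eq j),
      funext fun k ↦ (Equiv.ofFiberEquiv_map _ k).symm⟩
  · rintro ⟨e, rfl⟩
    exact Equiv.sum_comp e fun k ↦ Finsupp.single (i' k) 1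

theorem apply_eq_of_exponent_eq {γ : Type*} {r : (κ → σ) → γ}
    (hr : ∀ (i : κ → σ) (e : Equiv.Perm κ), r (i ∘ e) = r i) {i i' : κ → σ}
    (h : exponent i = exponent i') : r i = r i' := by
  obtain ⟨e, rfl⟩ := exponent_eq_iff.1 h
  exact hr i' e

theorem prod_exponent_add_one_le [Fintype σ] (i : κ → σ) :
    ∏ j, ((exponent i j : ℝ) + 1) ≤ 2 ^ Fintype.card κ := by
  classical
  have sum_exponent : ∑ j, exponent i j = Fintype.card κ := by
    simp only [exponent_apply]
    exact (card_eq_sum_card_fiberwise fun _ _ ↦ mem_coe.2 (mem_univ _)).symm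
  calc ∏ j, ((exponent i j : ℝ) + 1)
      ≤ ∏ j, 2 ^ exponent i j := by
        gcongr with j
        exact_mod_cast (exponent i j).lt_two_pow_self
    _ = 2 ^ Fintype.card κ := by rw [prod_pow_eq_pow_sum, sum_exponent]

variable [DecidableEq κ] [Fintype σ]

/-- The polynomial `∑ i, r i * ∏ k, X (i k)`, which is the multilinear form with coefficients `r`
evaluated at equal arguments. -/
noncomputable def diagonalPolynomial (r : (κ → σ) → ℂ) : MvPolynomial σ ℂ :=
  ∑ i, MvPolynomial.C (r i) * ∏ k, MvPolynomial.X (i k)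

theorem eval_diagonalPolynomial (r : (κ → σ) → ℂ) (z : σ → ℂ) :
    MvPolynomial.eval z (diagonalPolynomial r) = ∑ i, r i * ∏ k, z (i k) := by
  simp [diagonalPolynomial]

theorem coeff_diagonalPolynomial [DecidableEq σ] (r : (κ → σ) → ℂ) (α : σ →₀ ℕ) :
    (diagonalPolynomial r).coeff α = ∑ i with exponent i = α, r i := by
  have prod_X (i : κ → σ) :
      ∏ k, MvPolynomial.X (R := ℂ) (i k) = MvPolynomial.monomial (exponent i) 1 :=
    (MvPolynomial.monomial_sum_one _ _).symm
  simp [diagonalPolynomial, prod_X, MvPolynomial.C_mul_monomial, MvPolynomial.coeff_sum,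
    MvPolynomial.coeff_monomial, sum_filter]

end MultiIndices

section ClassCard

open Real

variable {m n : ℕ}

theorem classCard_eq_card_filter (i : Fin m → Fin n) :
    classCard i = #{j : Fin m → Fin n | exponent j = exponent i} := by
  simp only [classCard, ← exponent_eq_iff]
  rw [Nat.card_eq_fintype_card, Fintype.card_subtype]

variable {r : (Fin m → Fin n) → ℂ}
  (hr : ∀ (i : Fin m → Fin n) (e : Equiv.Perm (Fin m)), r (i ∘ e) = r i)

include hr

theorem coeff_exponent_diagonalPolynomial (i : Fin m → Fin n) :
    (diagonalPolynomial r).coeff (exponent i) = classCard i * r i := by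
  rw [coeff_diagonalPolynomial, sum_congr rfl fun j hj ↦
    apply_eq_of_exponent_eq hr ((mem_filter_univ j).1 hj), sum_const, nsmul_eq_mul,
    classCard_eq_card_filter]

theorem sum_classCard_mul_norm_sq_eq :
    ∑ i, (classCard i : ℝ) * ‖r i‖ ^ 2 =
      ∑ α ∈ univ.image (exponent (κ := Fin m)), ‖(diagonalPolynomial r).coeff α‖ ^ 2 := by
  rw [← sum_fiberwise_of_maps_to fun i _ ↦ mem_image_of_mem exponent (mem_univ i)]
  refine sum_congr rfl fun α hα ↦ ?_
  obtain ⟨i, -, rfl⟩ := mem_image.1 hα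
  have term_eq {j : Fin m → Fin n} (hj : exponent j = exponent i) :
      (classCard j : ℝ) * ‖r j‖ ^ 2 = classCard i * ‖r i‖ ^ 2 := by
    rw [apply_eq_of_exponent_eq hr hj, classCard_eq_card_filter, hj, ← classCard_eq_card_filter]
  calc ∑ j with exponent j = exponent i, (classCard j : ℝ) * ‖r j‖ ^ 2
      = classCard i * (classCard i * ‖r i‖ ^ 2) := by
        rw [sum_congr rfl fun j hj ↦ term_eq ((mem_filter_univ j).1 hj), sum_const, nsmul_eq_mul,
          ← classCard_eq_card_filter]
    _ = ‖(diagonalPolynomial r).coeff (exponent i)‖ ^ 2 := by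
        rw [coeff_exponent_diagonalPolynomial hr, norm_mul, Complex.norm_natCast]
        ring

theorem sqrt_sum_classCard_mul_norm_sq_le :
    √(∑ i, (classCard i : ℝ) * ‖r i‖ ^ 2) ≤ √2 ^ m *
      √(∑ α ∈ univ.image (exponent (κ := Fin m)),
        ‖(diagonalPolynomial r).coeff α‖ ^ 2 / ∏ j, ((α j : ℝ) + 1)) := by
  rw [sum_classCard_mul_norm_sq_eq hr, ← sqrt_mul_self (pow_nonneg (sqrt_nonneg 2) m),
    ← sqrt_mul (by positivity), ← mul_pow, mul_self_sqrt zero_le_two, mul_sum]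
  gcongr with α hα
  obtain ⟨i, -, rfl⟩ := mem_image.1 hα
  rw [mul_div_left_comm]
  refine le_mul_of_one_le_right (by positivity) ((one_le_div₀ (by positivity)).2 ?_)
  simpa using prod_exponent_add_one_le i

end ClassCard

section Polydisc

theorem sum_norm_le_of_forall_norm_sum_mul_le {τ 𝕜 : Type*} [Fintype τ] [RCLike 𝕜] {a : τ → 𝕜}
    {C : ℝ} (ha : ∀ μ : τ → 𝕜, (∀ t, ‖μ t‖ ≤ 1) → ‖∑ t, μ t * a t‖ ≤ C) :
    ∑ t, ‖a t‖ ≤ C := by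
  choose μ norm_μ norm_eq using fun t ↦ RCLike.exists_norm_eq_mul_self (a t)
  calc ∑ t, ‖a t‖ = ‖((∑ t, ‖a t‖ : ℝ) : 𝕜)‖ :=
        (RCLike.norm_of_nonneg (sum_nonneg fun t _ ↦ norm_nonneg _)).symm
    _ = ‖∑ t, μ t * a t‖ := by simp only [RCLike.ofReal_sum, norm_eq]
    _ ≤ C := ha μ fun t ↦ (norm_μ t).le

theorem le_of_forall_norm_lt_one {ι E : Type*} [NormedAddCommGroup E] [NormedSpace ℝ E]
    {f : (ι → E) → ℝ} (hf : Continuous f) {C : ℝ}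
    (hC : ∀ z : ι → E, (∀ j, ‖z j‖ < 1) → f z ≤ C) {z : ι → E} (hz : ∀ j, ‖z j‖ ≤ 1) :
    f z ≤ C := by
  have polydisc_subset : Set.univ.pi (fun _ : ι ↦ Metric.ball (0 : E) 1) ⊆ {z | f z ≤ C} :=
    fun w hw ↦ hC w fun j ↦ mem_ball_zero_iff.1 (hw j trivial)
  refine (isClosed_le hf continuous_const).closure_subset_iff.2 polydisc_subset ?_
  rw [closure_pi_set]
  intro j _
  rw [closure_ball _ one_ne_zero, mem_closedBall_zero_iff]
  exact hz j

end Polydisc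

theorem one_summing_weighted_coefficient_map_general {m n : ℕ} {τ : Type*} [Fintype τ]
    (r : τ → (Fin m → Fin n) → ℂ)
    (hsym : ∀ (t : τ) (i : Fin m → Fin n) (σ : Equiv.Perm (Fin m)), r t (i ∘ σ) = r t i)
    (h : ∀ μ : τ → ℂ, (∀ t, ‖μ t‖ ≤ 1) → ∀ z : Fin n → ℂ, (∀ j, ‖z j‖ < 1) →
      ‖∑ t, μ t * ∑ i : Fin m → Fin n, r t i * ∏ k, z (i k)‖ ≤ 1) :
    ∑ t, Real.sqrt (∑ i : Fin m → Fin n, (classCard i : ℝ) * ‖r t i‖ ^ 2) ≤ Real.sqrt 2 ^ m := by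
  let P (t : τ) := diagonalPolynomial (r t)
  have bound_polydisc (z : Fin n → ℂ) (hz : ∀ j, ‖z j‖ < 1) :
      ∑ t, ‖MvPolynomial.eval z (P t)‖ ≤ 1 :=
    sum_norm_le_of_forall_norm_sum_mul_le fun μ hμ ↦ by
      simpa only [P, eval_diagonalPolynomial] using h μ hμ z hz
  have bound_torus (z : Fin n → ℂ) (hz : ∀ j, ‖z j‖ = 1) :
      ∑ t, ‖MvPolynomial.eval z (P t)‖ ≤ 1 :=
    le_of_forall_norm_lt_one (continuous_finsetSum _ fun t _ ↦ (P t).continuous_eval.norm)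
      bound_polydisc fun j ↦ (hz j).le
  have carleman := sum_sqrt_sum_norm_mvPolynomial_coeff_sq_div_le (fun t (_ : Unit) ↦ P t)
    (univ.image (exponent (κ := Fin m))) (by simpa using bound_torus)
  simp only [univ_unique, sum_singleton] at carleman
  refine (sum_le_sum fun t _ ↦ sqrt_sum_classCard_mul_norm_sq_le (hsym t)).trans ?_
  rw [← mul_sum]
  exact mul_le_of_le_one_right (by positivity) carleman

/-- The 1-summing norm of the weighted coefficient map
`I : ⊗^{m,s}_ε ℓ₁^n → ℓ₂(M(m,n))`, `∑ r_i e_i ↦ (√|i| r_i)_i`, is at most `√2^m`: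
if symmetric families `r^{(1)}, …, r^{(N)}` satisfy
`sup_{z^{(1)},…,z^{(m)} ∈ 𝔻^n} |∑_t μ_t ∑_i r^{(t)}_i z^{(1)}_{i_1} ⋯ z^{(m)}_{i_m}| ≤ 1`
for all scalars `|μ_t| ≤ 1`, then `∑_t (∑_i |i|·|r^{(t)}_i|²)^{1/2} ≤ √2^m`. -/
theorem one_summing_weighted_coefficient_map (m n : ℕ) (hm : 0 < m) (hn : 0 < n)
    (N : ℕ) (r : Fin N → (Fin m → Fin n) → ℂ)
    (hsym : ∀ (t : Fin N) (i : Fin m → Fin n) (σ : Equiv.Perm (Fin m)),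
      r t (i ∘ σ) = r t i)
    (h : ∀ μ : Fin N → ℂ, (∀ t, ‖μ t‖ ≤ 1) →
      ∀ z : Fin m → Fin n → ℂ, (∀ k j, ‖z k j‖ < 1) →
        ‖∑ t, μ t * ∑ i : Fin m → Fin n, r t i * ∏ k, z k (i k)‖ ≤ 1) :
    ∑ t, Real.sqrt (∑ i : Fin m → Fin n, (classCard i : ℝ) * ‖r t i‖ ^ 2)
      ≤ Real.sqrt 2 ^ m :=
  one_summing_weighted_coefficient_map_general r hsym fun μ hμ z hz ↦
    h μ hμ (fun _ ↦ z) fun _ ↦ hz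
end

section
/- Let X_n = (ℂ^n, ‖·‖) be an n-dimensional Banach space in which the standard unit vectors e_1,…,e_n form a 1-unconditional basis. Then for every positive integer m, the unconditional basis constant of the monomials in the space 𝒫(^m X_n) of m-homogeneous polynomials satisfies χ_mon(𝒫(^m X_n)) ≤ (m^m/m!)² · 2^m · gl(𝒫(^m X_n)). -/
/-!
For `|ε_α| ≤ 1` and `ν z ≤ 1`, test the Gordon–Lewis constant on the diagonal operator
`T : a ↦ (ε_α z^α a_α)` from `𝒫(^m X_n)` to `ℓ₂`. Both of its relevant estimates rest on Khinchine's
inequality `‖P‖₂ ≤ √C(2m, m) ‖P‖₁` for `m`-homogeneous `P` on the torus. This inequality follows by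
interpolating `L²` between `L¹` and `L⁴`, since `‖P‖₄⁴ = ‖P²‖₂²` and a multi-index of order `2m`
splits as a sum of two of order `m` in at most `C(2m, m)` ways.

* Unconditionality of the norm makes `θ ↦ |P(zθ)|` bounded by `‖P‖` on the torus, so Khinchine's
  inequality exhibits a Pietsch domination of `T` and gives `π₁(T) ≤ √C(2m, m)`.
* If `T = S ∘ R` through `L₁(μ)`, then `∑ ε_α a_α z^α` is the trace of `S ∘ R` composed with the
  diagonal operator of `a`. Trace duality bounds it by `‖S‖ ∫ (∑ |R(a_α e_α)|²)^{1/2} dμ`, and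
  Khinchine's inequality under the integral bounds it by `√C(2m, m) ‖R‖ ‖S‖ ‖P‖`.

Together these give the constant `C(2m, m)`, which is at most `(m^m / m!)² 2^m`.
-/

open Finset MeasureTheory

/-- Coefficient space of `m`-homogeneous polynomials on `ℂ^n`: families of complex
numbers indexed by the multi-indices `α` with `|α| = m`. -/
abbrev Coef (n m : ℕ) :=
  { α : Fin n → ℕ // α ∈ Finset.Nat.antidiagonalTuple n m } → ℂ

/-- Evaluation of the `m`-homogeneous polynomial `∑_{|α|=m} a_α z^α` at `z ∈ ℂ^n`. -/
noncomputable def evalC {n m : ℕ} (a : Coef n m) (z : Fin n → ℂ) : ℂ :=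
  ∑ α : { α : Fin n → ℕ // α ∈ Finset.Nat.antidiagonalTuple n m },
    a α * ∏ i, z i ^ (α : Fin n → ℕ) i

/-- The norm of an `m`-homogeneous polynomial on `X = (ℂ^n, ν)`:
`‖P‖ = sup_{ν(z) ≤ 1} |P(z)|`. -/
noncomputable def polyNorm (n m : ℕ) (ν : (Fin n → ℂ) → ℝ) (a : Coef n m) : ℝ :=
  sSup {x : ℝ | ∃ z : Fin n → ℂ, ν z ≤ 1 ∧ x = ‖evalC a z‖}

/-- The operator norm of a linear map `T : V → W` relative to given norms on `V`, `W`. -/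
noncomputable def opNormWith {V W : Type*} [AddCommGroup V] [Module ℂ V]
    [AddCommGroup W] [Module ℂ W] (νV : V → ℝ) (νW : W → ℝ) (T : V →ₗ[ℂ] W) : ℝ :=
  sSup {x : ℝ | ∃ v, νV v ≤ 1 ∧ x = νW (T v)}

/-- The 1-summing norm `π₁(T)` of a linear map `T : V → W` relative to given norms
on `V`, `W`. -/
noncomputable def pi1With {V W : Type*} [AddCommGroup V] [Module ℂ V]
    [AddCommGroup W] [Module ℂ W] (νV : V → ℝ) (νW : W → ℝ) (T : V →ₗ[ℂ] W) : ℝ :=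
  sSup {s : ℝ | ∃ (N : ℕ) (v : Fin N → V),
    (∀ lam : Fin N → ℂ, (∀ i, ‖lam i‖ ≤ 1) → νV (∑ i, lam i • v i) ≤ 1) ∧
    s = ∑ i, νW (T (v i))}

/-- The Gordon–Lewis constant of `(V, νV)`: the smallest `c ≥ 0` such that every operator
`T : V → ℓ₂^k` factors as `T = S ∘ R` through some `L₁(μ)` with `‖R‖·‖S‖ ≤ c·π₁(T)`. -/
noncomputable def glWith (V : Type*) [AddCommGroup V] [Module ℂ V] (νV : V → ℝ) : ℝ :=
  sInf {c : ℝ | 0 ≤ c ∧ ∀ (k : ℕ) (T : V →ₗ[ℂ] EuclideanSpace ℂ (Fin k)),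
    ∃ (Ω : Type) (_ : MeasurableSpace Ω) (μ : Measure Ω)
      (R : V →ₗ[ℂ] Lp ℂ 1 μ) (S : Lp ℂ 1 μ →L[ℂ] EuclideanSpace ℂ (Fin k)),
      (∀ v, S (R v) = T v) ∧
      opNormWith νV (fun f => ‖f‖) R * ‖S‖
        ≤ c * pi1With νV (fun w => ‖w‖) T}

section FiniteDimensional

variable {𝕜 V E : Type*} [NontriviallyNormedField 𝕜] [AddCommGroup V] [Module 𝕜 V]
  (p : Seminorm 𝕜 V) (hp : ∀ v, p v = 0 → v = 0)

include hp

lemma normedSpaceCore_of_definite :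
    letI : Norm V := ⟨p⟩
    NormedSpace.Core 𝕜 V :=
  letI : Norm V := ⟨p⟩
  ⟨⟨apply_nonneg p, map_smul_eq_mul p, map_add_le_add p⟩, fun v ↦ ⟨hp v, fun h ↦ h ▸ map_zero p⟩⟩

variable [CompleteSpace 𝕜]

lemma exists_seminorm_map_le_mul_norm [NormedAddCommGroup E] [NormedSpace 𝕜 E]
    [FiniteDimensional 𝕜 E] (T : E →ₗ[𝕜] V) : ∃ C, 0 ≤ C ∧ ∀ x, p (T x) ≤ C * ‖x‖ := by
  let : Norm V := ⟨p⟩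
  let := NormedAddCommGroup.ofCore (normedSpaceCore_of_definite p hp)
  let := NormedSpace.ofCore (normedSpaceCore_of_definite p hp)
  exact ⟨‖T.toContinuousLinearMap‖, norm_nonneg _, T.toContinuousLinearMap.le_opNorm⟩

variable [FiniteDimensional 𝕜 V]

lemma exists_norm_map_le_mul_seminorm [SeminormedAddCommGroup E] [NormedSpace 𝕜 E]
    (T : V →ₗ[𝕜] E) : ∃ C, 0 ≤ C ∧ ∀ v, ‖T v‖ ≤ C * p v := by
  let : Norm V := ⟨p⟩
  let := NormedAddCommGroup.ofCore (normedSpaceCore_of_definite p hp)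
  let := NormedSpace.ofCore (normedSpaceCore_of_definite p hp)
  exact ⟨‖T.toContinuousLinearMap‖, norm_nonneg _, T.toContinuousLinearMap.le_opNorm⟩

end FiniteDimensional

section GordonLewis

variable {V W : Type*} [AddCommGroup V] [Module ℂ V] [NormedAddCommGroup W] [NormedSpace ℂ W]

lemma opNormWith_nonneg (νV : V → ℝ) (T : V →ₗ[ℂ] W) : 0 ≤ opNormWith νV norm T := by
  refine Real.sSup_nonneg ?_
  rintro _ ⟨v, -, rfl⟩
  exact norm_nonneg _

lemma pi1With_nonneg (νV : V → ℝ) (T : V →ₗ[ℂ] W) : 0 ≤ pi1With νV norm T := by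
  refine Real.sSup_nonneg ?_
  rintro _ ⟨N, v, -, rfl⟩
  positivity

lemma glWith_nonneg (νV : V → ℝ) : 0 ≤ glWith V νV :=
  Real.sInf_nonneg fun _ hc ↦ hc.1

lemma opNormWith_le {νV : V → ℝ} {T : V →ₗ[ℂ] W} {C : ℝ} (hC : 0 ≤ C)
    (h : ∀ v, ‖T v‖ ≤ C * νV v) : opNormWith νV norm T ≤ C := by
  refine Real.sSup_le ?_ hC
  rintro _ ⟨v, hv, rfl⟩
  exact (h v).trans (mul_le_of_le_one_right hC hv)

lemma sum_norm_apply_le_of_weaklySummable {νV : V → ℝ} {φ : V →ₗ[ℂ] ℂ} {C : ℝ} (hC : 0 ≤ C)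
    (hφ : ∀ v, ‖φ v‖ ≤ C * νV v) {N : ℕ} {v : Fin N → V}
    (hv : ∀ lam : Fin N → ℂ, (∀ i, ‖lam i‖ ≤ 1) → νV (∑ i, lam i • v i) ≤ 1) :
    ∑ i, ‖φ (v i)‖ ≤ C := by
  choose c hc_norm hc using fun i ↦ RCLike.exists_norm_eq_mul_self (φ (v i))
  calc ∑ i, ‖φ (v i)‖ = ‖φ (∑ i, c i • v i)‖ := by
        simp only [map_sum, map_smul, smul_eq_mul, ← hc]
        rw [← RCLike.ofReal_sum, RCLike.norm_of_nonneg (by positivity)]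
    _ ≤ C * νV (∑ i, c i • v i) := hφ _
    _ ≤ C := mul_le_of_le_one_right hC (hv c fun i ↦ (hc_norm i).le)

section Pietsch

variable {ι : Type*} [Fintype ι] {νV : V → ℝ} {T : V →ₗ[ℂ] W} {φ : ι → V →ₗ[ℂ] ℂ} {C : ι → ℝ}

/-- The easy half of Pietsch's domination theorem, for a finitely supported measure. -/
lemma sum_norm_apply_le_of_dominated (hC : ∀ j, 0 ≤ C j)
    (hφ : ∀ j v, ‖φ j v‖ ≤ C j * νV v) (hT : ∀ v, ‖T v‖ ≤ ∑ j, ‖φ j v‖)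
    {N : ℕ} {v : Fin N → V}
    (hv : ∀ lam : Fin N → ℂ, (∀ i, ‖lam i‖ ≤ 1) → νV (∑ i, lam i • v i) ≤ 1) :
    ∑ i, ‖T (v i)‖ ≤ ∑ j, C j :=
  calc ∑ i, ‖T (v i)‖ ≤ ∑ i, ∑ j, ‖φ j (v i)‖ := sum_le_sum fun i _ ↦ hT (v i)
    _ = ∑ j, ∑ i, ‖φ j (v i)‖ := sum_comm
    _ ≤ ∑ j, C j :=
      sum_le_sum fun j _ ↦ sum_norm_apply_le_of_weaklySummable (hC j) (hφ j) hv

lemma pi1With_le_of_dominated (hC : ∀ j, 0 ≤ C j)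
    (hφ : ∀ j v, ‖φ j v‖ ≤ C j * νV v) (hT : ∀ v, ‖T v‖ ≤ ∑ j, ‖φ j v‖) :
    pi1With νV norm T ≤ ∑ j, C j := by
  refine Real.sSup_le ?_ (sum_nonneg fun j _ ↦ hC j)
  rintro _ ⟨N, v, hv, rfl⟩
  exact sum_norm_apply_le_of_dominated hC hφ hT hv

end Pietsch

lemma pi1With_comp_of_isometry {W' : Type*} [NormedAddCommGroup W'] [NormedSpace ℂ W']
    (νV : V → ℝ) (U : W →ₗᵢ[ℂ] W') (T : V →ₗ[ℂ] W) :
    pi1With νV norm (U.toLinearMap ∘ₗ T) = pi1With νV norm T := by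
  simp [pi1With]

/-- The operator `T` has a factorization `T = S ∘ R` through an `L₁`-space with `‖R‖ · ‖S‖ ≤ c`;
the infimum of such `c` is the `L₁`-factorable norm `γ₁(T)`. The middle space is an `L₁(μ)` over a
`Type`, as in `glWith`. -/
def FactorsThroughL1 (νV : V → ℝ) (T : V →ₗ[ℂ] W) (c : ℝ) : Prop :=
  ∃ (Ω : Type) (_ : MeasurableSpace Ω) (μ : Measure Ω) (R : V →ₗ[ℂ] Lp ℂ 1 μ)
    (S : Lp ℂ 1 μ →L[ℂ] W), (∀ v, S (R v) = T v) ∧ opNormWith νV norm R * ‖S‖ ≤ c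

lemma FactorsThroughL1.isometry_comp {W' : Type*} [NormedAddCommGroup W'] [NormedSpace ℂ W']
    {νV : V → ℝ} {T : V →ₗ[ℂ] W} {c : ℝ} (h : FactorsThroughL1 νV T c) (U : W →ₗᵢ[ℂ] W') :
    FactorsThroughL1 νV (U.toLinearMap ∘ₗ T) c := by
  obtain ⟨Ω, _, μ, R, S, hSR, hc⟩ := h
  refine ⟨Ω, _, μ, R, U.toContinuousLinearMap.comp S, fun v ↦ congrArg U (hSR v), ?_⟩
  rwa [U.norm_toContinuousLinearMap_comp]

/-- The linear identification of `ℂ^ι` with `L₁` of the counting measure on a finite type `ι`,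
which embeds every finite-dimensional space into the class of `L₁`-spaces. -/
noncomputable def l1CountEquiv (ι : Type*) [Fintype ι] [MeasurableSpace ι]
    [MeasurableSingletonClass ι] : (ι → ℂ) ≃ₗ[ℂ] Lp ℂ 1 (Measure.count : Measure ι) where
  toFun v := MemLp.toLp v .of_discrete
  map_add' _ _ := MemLp.toLp_add ..
  map_smul' c _ := MemLp.toLp_const_smul c _
  invFun f := f
  left_inv _ := funext <| Measure.ae_count_iff.1 (MemLp.coeFn_toLp _)
  right_inv f := Lp.toLp_coeFn f _

variable [FiniteDimensional ℂ V] (p : Seminorm ℂ V) (hp : ∀ v, p v = 0 → v = 0)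

include hp

lemma norm_apply_le_opNormWith_mul (T : V →ₗ[ℂ] W) (v : V) :
    ‖T v‖ ≤ opNormWith p norm T * p v := by
  obtain ⟨C, hC, hT⟩ := exists_norm_map_le_mul_seminorm p hp T
  have hbdd : BddAbove {x : ℝ | ∃ v, p v ≤ 1 ∧ x = ‖T v‖} := by
    refine ⟨C, ?_⟩
    rintro _ ⟨v, hv, rfl⟩
    exact (hT v).trans (mul_le_of_le_one_right hC hv)
  obtain hv | hv := (apply_nonneg p v).eq_or_lt
  · simp [hp v hv.symm]
  have hunit : p ((p v : ℂ)⁻¹ • v) ≤ 1 := by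
    rw [map_smul_eq_mul, norm_inv, Complex.norm_of_nonneg hv.le, inv_mul_cancel₀ hv.ne']
  have := le_csSup hbdd ⟨_, hunit, rfl⟩
  rwa [map_smul, norm_smul, norm_inv, Complex.norm_of_nonneg hv.le, inv_mul_le_iff₀' hv] at this

lemma bddAbove_pi1With_set (T : V →ₗ[ℂ] W) :
    BddAbove {s : ℝ | ∃ (N : ℕ) (v : Fin N → V),
      (∀ lam : Fin N → ℂ, (∀ i, ‖lam i‖ ≤ 1) → p (∑ i, lam i • v i) ≤ 1) ∧
      s = ∑ i, ‖T (v i)‖} := by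
  let b := Module.finBasis ℂ V
  let φ j : V →ₗ[ℂ] ℂ := (‖T (b j)‖ : ℂ) • b.coord j
  choose C hC hφ using fun j ↦ exists_norm_map_le_mul_seminorm p hp (φ j)
  have hT v : ‖T v‖ ≤ ∑ j, ‖φ j v‖ := by
    conv_lhs => rw [← b.sum_repr v, map_sum]
    refine (norm_sum_le _ _).trans_eq (sum_congr rfl fun j _ ↦ ?_)
    simp [φ, norm_smul, mul_comm]
  refine ⟨∑ j, C j, ?_⟩
  rintro _ ⟨N, v, hv, rfl⟩
  exact sum_norm_apply_le_of_dominated hC hφ hT hv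

lemma opNormWith_le_pi1With (T : V →ₗ[ℂ] W) : opNormWith p norm T ≤ pi1With p norm T := by
  refine Real.sSup_le ?_ (pi1With_nonneg _ T)
  rintro _ ⟨v, hv, rfl⟩
  refine le_csSup (bddAbove_pi1With_set p hp T) ⟨1, fun _ ↦ v, fun lam hlam ↦ ?_, by simp⟩
  rw [Fin.sum_univ_one, map_smul_eq_mul]
  exact mul_le_one₀ (hlam 0) (apply_nonneg p v) hv

/-- Without this the infimum defining `glWith` could be the junk value `sInf ∅ = 0`. -/
lemma exists_factorsThroughL1_mul_pi1With :
    ∃ c, 0 ≤ c ∧ ∀ (k : ℕ) (T : V →ₗ[ℂ] EuclideanSpace ℂ (Fin k)),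
      FactorsThroughL1 p T (c * pi1With p norm T) := by
  let e := (Module.finBasis ℂ V).equivFun.trans (l1CountEquiv _)
  have := e.finiteDimensional
  obtain ⟨C, hC, he⟩ := exists_norm_map_le_mul_seminorm p hp e.toLinearMap
  obtain ⟨D, hD, he_symm⟩ := exists_seminorm_map_le_mul_norm p hp e.symm.toLinearMap
  refine ⟨C * D, by positivity, fun k T ↦ ⟨_, _, _, e.toLinearMap,
    (T ∘ₗ e.symm.toLinearMap).toContinuousLinearMap, fun v ↦ by simp, ?_⟩⟩
  have hpi := pi1With_nonneg p T
  have hS : ‖(T ∘ₗ e.symm.toLinearMap).toContinuousLinearMap‖ ≤ D * pi1With p norm T := by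
    refine ContinuousLinearMap.opNorm_le_bound _ (by positivity) fun f ↦ ?_
    calc ‖T (e.symm f)‖ ≤ opNormWith p norm T * p (e.symm f) :=
          norm_apply_le_opNormWith_mul p hp T _
      _ ≤ pi1With p norm T * (D * ‖f‖) := by
          gcongr
          exacts [opNormWith_le_pi1With p hp T, he_symm f]
      _ = D * pi1With p norm T * ‖f‖ := by ring
  rw [mul_assoc]
  gcongr
  exact opNormWith_le hC he

lemma le_glWith_mul_pi1With_mul {H : Type*} [NormedAddCommGroup H] [InnerProductSpace ℂ H]
    [FiniteDimensional ℂ H] (T : V →ₗ[ℂ] H) {x B : ℝ} (hB : 0 ≤ B)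
    (h : ∀ c, FactorsThroughL1 p T c → x ≤ c * B) :
    x ≤ glWith V p * (pi1With p norm T * B) := by
  let U := (stdOrthonormalBasis ℂ H).repr
  have hle (c : ℝ) (hc : ∀ (k : ℕ) (T : V →ₗ[ℂ] EuclideanSpace ℂ (Fin k)),
      FactorsThroughL1 p T (c * pi1With p norm T)) : x ≤ c * (pi1With p norm T * B) := by
    have hUT := (hc _ (U.toLinearIsometry.toLinearMap ∘ₗ T)).isometry_comp U.symm.toLinearIsometry
    rw [pi1With_comp_of_isometry] at hUT
    rw [← mul_assoc]
    exact h _ (by convert hUT; ext v; simp)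
  obtain ⟨c, hc0, hc⟩ := exists_factorsThroughL1_mul_pi1With p hp
  have hB' : 0 ≤ pi1With p norm T * B := mul_nonneg (pi1With_nonneg _ T) hB
  obtain h0 | h0 := hB'.eq_or_lt
  · simpa [← h0] using hle c hc
  · rw [← div_le_iff₀ h0]
    exact le_csInf ⟨c, hc0, hc⟩ fun c hc ↦ (div_le_iff₀ h0).2 (hle c hc.2)

end GordonLewis

section TraceDuality

variable {Ω 𝕜 E G : Type*} [MeasurableSpace Ω] {μ : Measure Ω} [NormedAddCommGroup E]

lemma norm_toLp_add_of_disjoint_support {f g : Ω → E} (hf : MemLp f 1 μ) (hg : MemLp g 1 μ)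
    (h : Disjoint (Function.support f) (Function.support g)) :
    ‖hf.toLp f + hg.toLp g‖ = ‖hf.toLp f‖ + ‖hg.toLp g‖ := by
  simp only [L1.norm_eq_integral_norm]
  rw [← integral_add (L1.integrable_coeFn _).norm (L1.integrable_coeFn _).norm]
  refine integral_congr_ae ?_
  filter_upwards [hf.coeFn_toLp, hg.coeFn_toLp, Lp.coeFn_add (hf.toLp f) (hg.toLp g)]
    with w hfw hgw hw
  rw [hw, Pi.add_apply, hfw, hgw]
  by_cases hw0 : f w = 0
  · simp [hw0]
  · simp [Function.notMem_support.1 (Set.disjoint_left.1 h hw0)]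

lemma norm_L1_apply_le_of_indicatorConstLp [NormedField 𝕜] [NormedSpace 𝕜 E]
    [SeminormedAddCommGroup G] [NormedSpace 𝕜 G] (F : Lp E 1 μ →L[𝕜] G) {C : ℝ}
    (h : ∀ (c : E) (s : Set Ω) (hs : MeasurableSet s) (hμs : μ s ≠ ⊤),
      ‖F (indicatorConstLp 1 hs hμs c)‖ ≤ C * (‖c‖ * μ.real s)) (f : Lp E 1 μ) :
    ‖F f‖ ≤ C * ‖f‖ := by
  induction f using Lp.induction ENNReal.one_ne_top with
  | indicatorConst c hs hμs =>
    rw [Lp.simpleFunc.coe_indicatorConst, norm_indicatorConstLp one_ne_zero ENNReal.one_ne_top]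
    simpa using h c _ hs hμs.ne
  | add hf hg hdisj hF hG =>
    rw [norm_toLp_add_of_disjoint_support hf hg hdisj, map_add, mul_add]
    exact (norm_add_le _ _).trans (add_le_add hF hG)
  | isClosed => exact isClosed_le (by fun_prop) (by fun_prop)

variable {ι : Type*} [Fintype ι] [RCLike 𝕜]

/-- The functional `F ↦ ∑ j, (S (F_j))_j` on `L₁(μ; ℓ₂^ι)` that an operator `S : L₁(μ) → ℓ₂^ι`
induces by trace duality. -/
noncomputable def traceFunctional (S : Lp 𝕜 1 μ →L[𝕜] EuclideanSpace 𝕜 ι) :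
    Lp (EuclideanSpace 𝕜 ι) 1 μ →L[𝕜] 𝕜 :=
  ∑ j, EuclideanSpace.proj j ∘L S ∘L (EuclideanSpace.proj j).compLpL 1 μ

lemma traceFunctional_apply (S : Lp 𝕜 1 μ →L[𝕜] EuclideanSpace 𝕜 ι)
    (F : Lp (EuclideanSpace 𝕜 ι) 1 μ) :
    traceFunctional S F = ∑ j, S ((EuclideanSpace.proj (𝕜 := 𝕜) j).compLp F) j := by
  simp [traceFunctional, ContinuousLinearMap.compLpL, ContinuousLinearMap.compLpₗ]

lemma compLp_proj_indicatorConstLp {s : Set Ω} (hs : MeasurableSet s) (hμs : μ s ≠ ⊤)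
    (c : EuclideanSpace 𝕜 ι) (j : ι) :
    (EuclideanSpace.proj (𝕜 := 𝕜) j).compLp (indicatorConstLp 1 hs hμs c) =
      c j • indicatorConstLp 1 hs hμs (1 : 𝕜) := by
  refine Lp.ext ?_
  filter_upwards [ContinuousLinearMap.coeFn_compLp (EuclideanSpace.proj (𝕜 := 𝕜) j)
      (indicatorConstLp 1 hs hμs c), indicatorConstLp_coeFn (hs := hs) (hμs := hμs) (c := c),
    indicatorConstLp_coeFn (p := 1) (hs := hs) (hμs := hμs) (c := (1 : 𝕜)),
    Lp.coeFn_smul (c j) (indicatorConstLp 1 hs hμs (1 : 𝕜))] with w h₁ h₂ h₃ h₄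
  rw [h₁, h₄, h₂, Pi.smul_apply, h₃]
  by_cases hw : w ∈ s <;> simp [hw]

lemma norm_sum_mul_le_euclidean (x y : EuclideanSpace 𝕜 ι) :
    ‖∑ j, x j * y j‖ ≤ ‖x‖ * ‖y‖ := by
  rw [EuclideanSpace.norm_eq, EuclideanSpace.norm_eq]
  refine (norm_sum_le _ _).trans ?_
  simp only [norm_mul]
  exact Real.sum_mul_le_sqrt_mul_sqrt _ _ _

lemma norm_traceFunctional_apply_le (S : Lp 𝕜 1 μ →L[𝕜] EuclideanSpace 𝕜 ι)
    (F : Lp (EuclideanSpace 𝕜 ι) 1 μ) : ‖traceFunctional S F‖ ≤ ‖S‖ * ‖F‖ := by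
  refine norm_L1_apply_le_of_indicatorConstLp _ (fun c s hs hμs ↦ ?_) F
  simp only [traceFunctional_apply, compLp_proj_indicatorConstLp, map_smul, PiLp.smul_apply,
    smul_eq_mul]
  calc ‖∑ j, c j * S (indicatorConstLp 1 hs hμs 1) j‖
      ≤ ‖c‖ * ‖S (indicatorConstLp 1 hs hμs 1)‖ := norm_sum_mul_le_euclidean ..
    _ ≤ ‖c‖ * (‖S‖ * ‖indicatorConstLp 1 hs hμs (1 : 𝕜)‖) := by gcongr; exact S.le_opNorm _
    _ = ‖S‖ * (‖c‖ * μ.real s) := by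
      rw [norm_indicatorConstLp one_ne_zero ENNReal.one_ne_top]
      simp [mul_left_comm]

lemma norm_sum_apply_le_integral_sqrt (S : Lp 𝕜 1 μ →L[𝕜] EuclideanSpace 𝕜 ι)
    (f : ι → Lp 𝕜 1 μ) :
    ‖∑ j, S (f j) j‖ ≤ ‖S‖ * ∫ w, √(∑ j, ‖f j w‖ ^ 2) ∂μ := by
  have hF : MemLp (fun w ↦ (WithLp.toLp 2 (f · w) : EuclideanSpace 𝕜 ι)) 1 μ :=
    MemLp.of_eval_piLp fun j ↦ Lp.memLp (f j)
  have hnorm : ‖hF.toLp _‖ = ∫ w, √(∑ j, ‖f j w‖ ^ 2) ∂μ := by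
    rw [L1.norm_eq_integral_norm]
    refine integral_congr_ae ?_
    filter_upwards [hF.coeFn_toLp] with w hw
    rw [hw, EuclideanSpace.norm_eq]
  have hproj (j : ι) : (EuclideanSpace.proj (𝕜 := 𝕜) j).compLp (hF.toLp _) = f j := by
    refine Lp.ext ?_
    filter_upwards [ContinuousLinearMap.coeFn_compLp (EuclideanSpace.proj (𝕜 := 𝕜) j) (hF.toLp _),
      hF.coeFn_toLp] with w h₁ h₂
    simp [h₁, h₂]
  simpa only [traceFunctional_apply, hproj, hnorm] using
    norm_traceFunctional_apply_le S (hF.toLp _)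

end TraceDuality

section MultiIndex

/-- The multi-indices `α` of length `n` and order `|α| = m`, indexing the coefficients in
`Coef n m`. -/
abbrev MultiIndex (n m : ℕ) := {α : Fin n → ℕ // α ∈ Finset.Nat.antidiagonalTuple n m}

namespace MultiIndex

variable {n k l m : ℕ}

lemma sum_eq (α : MultiIndex n m) : ∑ i, α.1 i = m := Finset.Nat.mem_antidiagonalTuple.1 α.2

lemma apply_le (α : MultiIndex n m) (i : Fin n) : α.1 i ≤ m :=
  (single_le_sum (fun _ _ ↦ Nat.zero_le _) (mem_univ i)).trans_eq α.sum_eq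

/-- The sum `α + β` of multi-indices, of order `|α| + |β|`. -/
def add (α : MultiIndex n k) (β : MultiIndex n l) : MultiIndex n (k + l) :=
  ⟨α.1 + β.1, Finset.Nat.mem_antidiagonalTuple.2 <| by
    simp [sum_add_distrib, α.sum_eq, β.sum_eq]⟩

lemma card_add_fiber_le (γ : MultiIndex n (k + l)) :
    #{p : MultiIndex n k × MultiIndex n l | p.1.add p.2 = γ} ≤ (k + l).choose k := by
  let toMultiset (α : Fin n → ℕ) := Finsupp.toMultiset (Finsupp.equivFunOnFinite.symm α)
  have card_toMultiset {d : ℕ} (α : MultiIndex n d) : (toMultiset α.1).card = d := by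
    simp [toMultiset, Finsupp.card_toMultiset, Finsupp.sum_fintype, α.sum_eq]
  calc #{p : MultiIndex n k × MultiIndex n l | p.1.add p.2 = γ}
      ≤ #((toMultiset γ.1).powersetCard k).toFinset := by
        refine card_le_card_of_injOn (fun p ↦ toMultiset p.1.1) ?_ ?_
        · rintro ⟨α, β⟩ hp
          obtain rfl : α.add β = γ := by simpa using hp
          suffices toMultiset α.1 ≤ toMultiset (α.add β).1 by
            simpa [Multiset.mem_powersetCard, card_toMultiset]
          exact Finsupp.toMultiset_strictMono.monotone fun i ↦ Nat.le_add_right _ _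
        · rintro ⟨α, β⟩ hp ⟨α', β'⟩ hp' h
          obtain rfl : α = α' := Subtype.ext <|
            Finsupp.equivFunOnFinite.symm.injective (Multiset.toFinsupp.symm.injective h)
          simp only [coe_filter, mem_univ, true_and, Set.mem_ofPred_eq] at hp hp'
          have hadd : α.1 + β.1 = α.1 + β'.1 := congrArg Subtype.val (hp.trans hp'.symm)
          exact Prod.ext rfl (Subtype.ext (add_left_cancel hadd))
    _ ≤ ((toMultiset γ.1).powersetCard k).card := Multiset.toFinset_card_le _
    _ = (k + l).choose k := by rw [Multiset.card_powersetCard, card_toMultiset]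

end MultiIndex

variable {n k l m : ℕ}

/-- The monomials `z^α` of degree `m` at a point `z`, as a family indexed by `α`. -/
def monom (z : Fin n → ℂ) (α : MultiIndex n m) : ℂ := ∏ i, z i ^ α.1 i

lemma monom_mul (z w : Fin n → ℂ) (α : MultiIndex n m) :
    monom (z * w) α = monom z α * monom w α := by
  simp [monom, mul_pow, prod_mul_distrib]

lemma monom_add (z : Fin n → ℂ) (α : MultiIndex n k) (β : MultiIndex n l) :
    monom z (α.add β) = monom z α * monom z β := by
  simp [monom, MultiIndex.add, pow_add, prod_mul_distrib]

lemma monom_smul (t : ℂ) (z : Fin n → ℂ) (α : MultiIndex n m) :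
    monom (t • z) α = t ^ m * monom z α := by
  simp [monom, mul_pow, prod_mul_distrib, prod_pow_eq_pow_sum, α.sum_eq]

lemma sum_monom_smul_map_smul_single {V : Type*} [AddCommGroup V] [Module ℂ V]
    (R : Coef n m →ₗ[ℂ] V) (a : Coef n m) (z : Fin n → ℂ) :
    ∑ α, monom z α • R (a α • Pi.single α 1) = R (a * monom z) := by
  simp only [← map_smul, ← map_sum]
  congr 1
  ext α
  simp [Finset.sum_apply, Pi.single_apply, mul_comm]

lemma evalC_eq_sum_monom (a : Coef n m) (z : Fin n → ℂ) : evalC a z = ∑ α, a α * monom z α := rfl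

lemma evalC_smul (a : Coef n m) (t : ℂ) (z : Fin n → ℂ) :
    evalC a (t • z) = t ^ m * evalC a z := by
  simp [evalC_eq_sum_monom, monom_smul, mul_left_comm, mul_sum]

lemma evalC_mul_monom (a : Coef n m) (θ z : Fin n → ℂ) :
    evalC (a * monom θ) z = evalC a (θ * z) := by
  simp [evalC_eq_sum_monom, monom_mul, mul_assoc]

/-- Evaluation of `m`-homogeneous polynomials at `z`, as a linear functional of the
coefficients. -/
noncomputable def evalₗ (z : Fin n → ℂ) : Coef n m →ₗ[ℂ] ℂ where
  toFun a := evalC a z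
  map_add' a b := by simp [evalC, add_mul, sum_add_distrib]
  map_smul' c a := by simp [evalC, mul_assoc, mul_sum]

@[simp]
lemma evalₗ_apply (z : Fin n → ℂ) (a : Coef n m) : evalₗ z a = evalC a z := rfl

/-- The coefficients of the product of a `k`-homogeneous and an `l`-homogeneous polynomial. -/
def mulC (x : Coef n k) (y : Coef n l) : Coef n (k + l) :=
  fun γ ↦ ∑ p : MultiIndex n k × MultiIndex n l with p.1.add p.2 = γ, x p.1 * y p.2

lemma evalC_mulC (x : Coef n k) (y : Coef n l) (z : Fin n → ℂ) :
    evalC (mulC x y) z = evalC x z * evalC y z := by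
  simp only [evalC_eq_sum_monom, mulC, sum_mul_sum, ← Fintype.sum_prod_type']
  rw [← sum_fiberwise univ fun p : MultiIndex n k × MultiIndex n l ↦ p.1.add p.2]
  refine sum_congr rfl fun γ _ ↦ (sum_mul ..).trans (sum_congr rfl fun p hp ↦ ?_)
  rw [← (mem_filter.1 hp).2, monom_add]
  ring

lemma sum_norm_mulC_sq_le (x : Coef n k) (y : Coef n l) :
    ∑ γ, ‖mulC x y γ‖ ^ 2 ≤ (k + l).choose k * ((∑ α, ‖x α‖ ^ 2) * ∑ β, ‖y β‖ ^ 2) := by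
  have hfiber (γ : MultiIndex n (k + l)) : ‖mulC x y γ‖ ^ 2 ≤
      (k + l).choose k * ∑ p : MultiIndex n k × MultiIndex n l with p.1.add p.2 = γ,
        ‖x p.1‖ ^ 2 * ‖y p.2‖ ^ 2 := by
    simp only [← mul_pow, ← norm_mul]
    grw [← γ.card_add_fiber_le, ← sq_sum_le_card_mul_sum_sq, mulC, norm_sum_le]
  rw [sum_mul_sum, ← Fintype.sum_prod_type',
    ← sum_fiberwise univ fun p : MultiIndex n k × MultiIndex n l ↦ p.1.add p.2, mul_sum]
  exact sum_le_sum fun γ _ ↦ hfiber γ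

end MultiIndex

section Torus

open scoped BigOperators ComplexConjugate

lemma expect_norm_sum_addChar_sq {G ι : Type*} [AddCommGroup G] [Fintype G] [Fintype ι]
    {ψ : ι → AddChar G ℂ} (hψ : Function.Injective ψ) (c : ι → ℂ) :
    𝔼 g, ‖∑ i, c i * ψ i g‖ ^ 2 = ∑ i, ‖c i‖ ^ 2 := by
  classical
  have horth (i j : ι) : 𝔼 g, ψ i g * conj (ψ j g) = if j = i then 1 else 0 := by
    simpa [RCLike.wInner_cWeight_eq_expect, hψ.eq_iff] using
      AddChar.wInner_cWeight_eq_boole (ψ j) (ψ i)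
  have hexpand (g : G) : ((‖∑ i, c i * ψ i g‖ ^ 2 : ℝ) : ℂ) =
      ∑ i, ∑ j, c i * conj (c j) * (ψ i g * conj (ψ j g)) := by
    rw [Complex.ofReal_pow, ← Complex.mul_conj', map_sum, sum_mul_sum]
    simp only [map_mul, mul_mul_mul_comm]
  refine Complex.ofReal_injective ?_
  simp only [Complex.ofReal_expect, Complex.ofReal_sum, hexpand, expect_sum_comm, ← mul_expect,
    horth, mul_ite, mul_one, mul_zero, sum_ite_eq', mem_univ, if_true,
    Complex.mul_conj', Complex.ofReal_pow]

variable {n m M : ℕ} [NeZero M]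

/-- The points of the torus `𝕋^n` whose coordinates are `M`-th roots of unity. Averaging over `g`
is the discrete substitute for integration over `𝕋^n`; it is exact for trigonometric polynomials
of degree less than `M`. -/
noncomputable def torusPoint (g : Fin n → ZMod M) (i : Fin n) : ℂ := ZMod.stdAddChar (g i)

lemma norm_torusPoint (g : Fin n → ZMod M) (i : Fin n) : ‖torusPoint g i‖ = 1 :=
  AddChar.norm_apply _ _

variable (M) in
/-- The monomial `z^α` on the discrete torus, as an additive character. -/
noncomputable def monomChar (α : MultiIndex n m) : AddChar (Fin n → ZMod M) ℂ where
  toFun g := monom (torusPoint g) α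
  map_zero_eq_one' := by simp [monom, torusPoint]
  map_add_eq_mul' g h := by
    simp [monom, torusPoint, AddChar.map_add_eq_mul, mul_pow, prod_mul_distrib]

lemma monomChar_injective (hM : m < M) :
    Function.Injective (monomChar M : MultiIndex n m → AddChar (Fin n → ZMod M) ℂ) := by
  have hval (α : MultiIndex n m) (i : Fin n) :
      monomChar M α (Pi.single i 1) = ZMod.stdAddChar (α.1 i : ZMod M) := by
    change ∏ k, ZMod.stdAddChar ((Pi.single i 1 : Fin n → ZMod M) k) ^ α.1 k = _
    rw [Fintype.prod_eq_single i fun k hk ↦ by simp [hk]]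
    simp [← AddChar.map_nsmul_eq_pow]
  intro α β h
  ext i
  have := ZMod.injective_stdAddChar (by rw [← hval α, ← hval β, h] :
    ZMod.stdAddChar (α.1 i : ZMod M) = ZMod.stdAddChar (β.1 i : ZMod M))
  rwa [ZMod.natCast_eq_natCast_iff', Nat.mod_eq_of_lt ((α.apply_le i).trans_lt hM),
    Nat.mod_eq_of_lt ((β.apply_le i).trans_lt hM)] at this

lemma expect_norm_evalC_torusPoint_sq (hM : m < M) (c : Coef n m) :
    𝔼 g : Fin n → ZMod M, ‖evalC c (torusPoint g)‖ ^ 2 = ∑ α, ‖c α‖ ^ 2 :=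
  expect_norm_sum_addChar_sq (monomChar_injective hM) c

lemma expect_sq_pow_three_le {ι : Type*} {s : Finset ι} {f : ι → ℝ} (hf : ∀ i ∈ s, 0 ≤ f i) :
    (𝔼 i ∈ s, f i ^ 2) ^ 3 ≤ (𝔼 i ∈ s, f i) ^ 2 * 𝔼 i ∈ s, f i ^ 4 := by
  have h₁ : (𝔼 i ∈ s, f i ^ 2) ^ 2 ≤ (𝔼 i ∈ s, f i) * 𝔼 i ∈ s, f i ^ 3 := by
    have hsq (i) (hi : i ∈ s) : √(f i) ^ 2 = f i := Real.sq_sqrt (hf i hi)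
    calc (𝔼 i ∈ s, f i ^ 2) ^ 2 = (𝔼 i ∈ s, √(f i) * √(f i) ^ 3) ^ 2 := by
          congr 1
          exact expect_congr rfl fun i hi ↦ by rw [← pow_succ', pow_mul _ 2 2, hsq i hi]
      _ ≤ (𝔼 i ∈ s, √(f i) ^ 2) * 𝔼 i ∈ s, (√(f i) ^ 3) ^ 2 := expect_mul_sq_le_sq_mul_sq ..
      _ = (𝔼 i ∈ s, f i) * 𝔼 i ∈ s, f i ^ 3 := by
          congr 1
          · exact expect_congr rfl hsq
          · exact expect_congr rfl fun i hi ↦ by rw [pow_right_comm, hsq i hi]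
  have h₂ : (𝔼 i ∈ s, f i ^ 3) ^ 2 ≤ (𝔼 i ∈ s, f i ^ 2) * 𝔼 i ∈ s, f i ^ 4 :=
    calc (𝔼 i ∈ s, f i ^ 3) ^ 2 = (𝔼 i ∈ s, f i * f i ^ 2) ^ 2 := by simp only [← pow_succ']
      _ ≤ (𝔼 i ∈ s, f i ^ 2) * 𝔼 i ∈ s, (f i ^ 2) ^ 2 := expect_mul_sq_le_sq_mul_sq ..
      _ = (𝔼 i ∈ s, f i ^ 2) * 𝔼 i ∈ s, f i ^ 4 := by simp only [← pow_mul]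
  obtain h₀ | h₀ := (expect_nonneg fun i _ ↦ sq_nonneg (f i) : 0 ≤ 𝔼 i ∈ s, f i ^ 2).eq_or_lt
  · rw [← h₀, zero_pow three_ne_zero]
    exact mul_nonneg (sq_nonneg _) (expect_nonneg fun i _ ↦ by positivity)
  refine le_of_mul_le_mul_right ?_ h₀
  calc (𝔼 i ∈ s, f i ^ 2) ^ 3 * 𝔼 i ∈ s, f i ^ 2
      = ((𝔼 i ∈ s, f i ^ 2) ^ 2) ^ 2 := by ring
    _ ≤ ((𝔼 i ∈ s, f i) * 𝔼 i ∈ s, f i ^ 3) ^ 2 := by gcongr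
    _ = (𝔼 i ∈ s, f i) ^ 2 * (𝔼 i ∈ s, f i ^ 3) ^ 2 := mul_pow ..
    _ ≤ (𝔼 i ∈ s, f i) ^ 2 * ((𝔼 i ∈ s, f i ^ 2) * 𝔼 i ∈ s, f i ^ 4) := by gcongr
    _ = _ := by ring

lemma sum_norm_sq_le_centralBinom_mul_expect_sq (hM : 2 * m < M) (x : Coef n m) :
    ∑ α, ‖x α‖ ^ 2 ≤
      m.centralBinom * (𝔼 g : Fin n → ZMod M, ‖evalC x (torusPoint g)‖) ^ 2 := by
  set A := ∑ α, ‖x α‖ ^ 2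
  set B := 𝔼 g : Fin n → ZMod M, ‖evalC x (torusPoint g)‖
  have hL2 : 𝔼 g : Fin n → ZMod M, ‖evalC x (torusPoint g)‖ ^ 2 = A :=
    expect_norm_evalC_torusPoint_sq (by lia) x
  have hL4 : 𝔼 g : Fin n → ZMod M, ‖evalC x (torusPoint g)‖ ^ 4 ≤ m.centralBinom * A ^ 2 :=
    calc 𝔼 g : Fin n → ZMod M, ‖evalC x (torusPoint g)‖ ^ 4
        = 𝔼 g : Fin n → ZMod M, ‖evalC (mulC x x) (torusPoint g)‖ ^ 2 := by
          simp only [evalC_mulC, norm_mul]; ring_nf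
      _ = ∑ γ, ‖mulC x x γ‖ ^ 2 := expect_norm_evalC_torusPoint_sq (by lia) _
      _ ≤ (m + m).choose m * (A * A) := sum_norm_mulC_sq_le x x
      _ = m.centralBinom * A ^ 2 := by rw [Nat.centralBinom, two_mul, sq]
  have hinterp : A ^ 3 ≤ B ^ 2 * (m.centralBinom * A ^ 2) := by
    grw [← hL4, ← hL2]
    exact expect_sq_pow_three_le fun _ _ ↦ norm_nonneg _
  obtain hA | hA := (by positivity : 0 ≤ A).eq_or_lt
  · rw [← hA]
    positivity
  · refine le_of_mul_le_mul_right ?_ (pow_pos hA 2)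
    linarith

/-- Khinchine's inequality for homogeneous polynomials on the torus. -/
lemma sqrt_sum_norm_sq_le_expect (hM : 2 * m < M) (x : Coef n m) :
    √(∑ α, ‖x α‖ ^ 2) ≤ √m.centralBinom * 𝔼 g : Fin n → ZMod M, ‖evalC x (torusPoint g)‖ := by
  refine Real.sqrt_le_iff.2 ⟨by positivity, ?_⟩
  rw [mul_pow, Real.sq_sqrt (Nat.cast_nonneg _)]
  exact sum_norm_sq_le_centralBinom_mul_expect_sq hM x

lemma coeFn_sum_monom_smul {Ω : Type*} [MeasurableSpace Ω] {μ : Measure Ω}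
    (f : MultiIndex n m → Lp ℂ 1 μ) (z : Fin n → ℂ) :
    ⇑(∑ α, monom z α • f α) =ᵐ[μ] fun w ↦ evalC (f · w) z := by
  filter_upwards [Lp.coeFn_finsetSum univ (fun α ↦ monom z α • f α),
    ae_all_iff.2 fun α ↦ Lp.coeFn_smul (monom z α) (f α)] with w hsum hsmul
  simp only [hsum, Finset.sum_apply, hsmul, Pi.smul_apply, smul_eq_mul, evalC_eq_sum_monom,
    mul_comm]

lemma integral_sqrt_sum_norm_sq_le_expect {Ω : Type*} [MeasurableSpace Ω] {μ : Measure Ω}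
    (hM : 2 * m < M) (f : MultiIndex n m → Lp ℂ 1 μ) :
    ∫ w, √(∑ α, ‖f α w‖ ^ 2) ∂μ ≤
      √m.centralBinom * 𝔼 g : Fin n → ZMod M, ‖∑ α, monom (torusPoint g) α • f α‖ := by
  have hint (g : Fin n → ZMod M) : Integrable (fun w ↦ ‖evalC (f · w) (torusPoint g)‖) μ :=
    ((integrable_congr (coeFn_sum_monom_smul f _)).1 (L1.integrable_coeFn _)).norm
  calc ∫ w, √(∑ α, ‖f α w‖ ^ 2) ∂μ
      ≤ ∫ w, √m.centralBinom * 𝔼 g : Fin n → ZMod M, ‖evalC (f · w) (torusPoint g)‖ ∂μ := by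
        refine integral_mono_of_nonneg (.of_forall fun w ↦ Real.sqrt_nonneg _) ?_
          (.of_forall fun w ↦ sqrt_sum_norm_sq_le_expect hM _)
        simp only [Fintype.expect_eq_sum_div_card]
        fun_prop
    _ = √m.centralBinom * 𝔼 g : Fin n → ZMod M, ∫ w, ‖evalC (f · w) (torusPoint g)‖ ∂μ := by
        rw [integral_const_mul]
        simp only [Fintype.expect_eq_sum_div_card, integral_div]
        rw [integral_finsetSum _ fun g _ ↦ hint g]
    _ = √m.centralBinom * 𝔼 g : Fin n → ZMod M, ‖∑ α, monom (torusPoint g) α • f α‖ := by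
        simp only [L1.norm_eq_integral_norm]
        exact congrArg _ <| expect_congr rfl fun g _ ↦
          integral_congr_ae ((coeFn_sum_monom_smul f _).fun_comp norm).symm

end Torus

section Polynomials

variable {n m : ℕ} {ν : (Fin n → ℂ) → ℝ}

lemma polyNorm_nonneg (a : Coef n m) : 0 ≤ polyNorm n m ν a := by
  refine Real.sSup_nonneg ?_
  rintro _ ⟨z, -, rfl⟩
  exact norm_nonneg _

lemma polyNorm_le {a : Coef n m} {C : ℝ} (hC : 0 ≤ C) (h : ∀ z, ν z ≤ 1 → ‖evalC a z‖ ≤ C) :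
    polyNorm n m ν a ≤ C := by
  refine Real.sSup_le ?_ hC
  rintro _ ⟨z, hz, rfl⟩
  exact h z hz

lemma eq_zero_of_evalC_torusPoint_eq_zero {M : ℕ} [NeZero M] (hM : m < M) {a : Coef n m}
    (ha : ∀ g : Fin n → ZMod M, evalC a (torusPoint g) = 0) : a = 0 := by
  have h := expect_norm_evalC_torusPoint_sq hM a
  simp only [ha, norm_zero, ne_eq, OfNat.ofNat_ne_zero, not_false_eq_true, zero_pow,
    expect_const_zero] at h
  simpa [sum_eq_zero_iff_of_nonneg, funext_iff] using h.symm

/-- A definite, absolutely homogeneous function on `ℂ^n` for which the standard basis is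
1-unconditional. The triangle inequality is not assumed; a quasi-triangle inequality is automatic,
since such a `ν` is equivalent to the sup norm. -/
structure IsUnconditionalQuasinorm (ν : (Fin n → ℂ) → ℝ) : Prop where
  protected map_smul (c : ℂ) (z : Fin n → ℂ) : ν (c • z) = ‖c‖ * ν z
  eq_zero_of_map_eq_zero (z : Fin n → ℂ) : ν z = 0 → z = 0
  map_mul_le (ε z : Fin n → ℂ) : (∀ i, ‖ε i‖ ≤ 1) → ν (ε * z) ≤ ν z

namespace IsUnconditionalQuasinorm

variable (hν : IsUnconditionalQuasinorm ν)

include hν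

protected lemma map_zero : ν 0 = 0 := by simpa using hν.map_smul 0 0

protected lemma nonneg (z : Fin n → ℂ) : 0 ≤ ν z := by
  simpa [hν.map_zero] using hν.map_mul_le 0 z

lemma norm_apply_mul_map_single_le (z : Fin n → ℂ) (i : Fin n) :
    ‖z i‖ * ν (Pi.single i 1) ≤ ν z := by
  have hsingle : Pi.single i 1 * z = z i • (Pi.single i 1 : Fin n → ℂ) := by
    ext j
    obtain rfl | hj := eq_or_ne j i <;> simp [*]
  rw [← hν.map_smul, ← hsingle]
  refine hν.map_mul_le _ _ fun j ↦ ?_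
  obtain rfl | hj := eq_or_ne j i <;> simp [*]

lemma isBounded_unitBall : Bornology.IsBounded {z | ν z ≤ 1} := by
  refine Bornology.forall_isBounded_image_eval_iff.1 fun i ↦
    isBounded_iff_forall_norm_le.2 ⟨(ν (Pi.single i 1))⁻¹, ?_⟩
  rintro _ ⟨z, hz, rfl⟩
  have hpos : 0 < ν (Pi.single i 1) := (hν.nonneg _).lt_of_ne' fun h ↦
    one_ne_zero (Pi.single_eq_zero_iff.1 (hν.eq_zero_of_map_eq_zero _ h))
  rw [← one_div, le_div_iff₀ hpos]
  exact (hν.norm_apply_mul_map_single_le z i).trans hz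

lemma le_polyNorm (a : Coef n m) {z : Fin n → ℂ} (hz : ν z ≤ 1) :
    ‖evalC a z‖ ≤ polyNorm n m ν a := by
  obtain ⟨r, hr⟩ := hν.isBounded_unitBall.subset_closedBall 0
  have hcont : Continuous (evalC a) := by unfold evalC; fun_prop
  obtain ⟨C, hC⟩ := (isCompact_closedBall 0 r).exists_bound_of_continuousOn hcont.continuousOn
  refine le_csSup ⟨C, ?_⟩ ⟨z, hz, rfl⟩
  rintro _ ⟨w, hw, rfl⟩
  exact hC w (hr hw)

variable (m) in
/-- `polyNorm`, as a seminorm on the coefficient space. -/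
noncomputable def polySeminorm : Seminorm ℂ (Coef n m) :=
  .ofSMulLE (polyNorm n m ν)
    (le_antisymm (polyNorm_le le_rfl fun z _ ↦ by simp [evalC]) (polyNorm_nonneg _))
    (fun a b ↦ polyNorm_le (add_nonneg (polyNorm_nonneg a) (polyNorm_nonneg b)) fun z hz ↦ by
      rw [← evalₗ_apply, map_add]
      exact (norm_add_le _ _).trans (add_le_add (hν.le_polyNorm a hz) (hν.le_polyNorm b hz)))
    (fun c a ↦ polyNorm_le (mul_nonneg (norm_nonneg c) (polyNorm_nonneg a)) fun z hz ↦ by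
      rw [← evalₗ_apply, map_smul, norm_smul]
      exact mul_le_mul_of_nonneg_left (hν.le_polyNorm a hz) (norm_nonneg c))

lemma eq_zero_of_polyNorm_eq_zero (a : Coef n m) (ha : polyNorm n m ν a = 0) : a = 0 := by
  let t : ℝ := (ν 1 + 1)⁻¹
  have hν₁ : 0 ≤ ν 1 := hν.nonneg 1
  have ht : 0 < t := by positivity
  refine eq_zero_of_evalC_torusPoint_eq_zero m.lt_succ_self fun g ↦ ?_
  have hmem : ν ((t : ℂ) • torusPoint g) ≤ 1 := by
    have hle : ν (torusPoint g) ≤ ν 1 := by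
      simpa using hν.map_mul_le (torusPoint g) 1 fun i ↦ (norm_torusPoint g i).le
    rw [hν.map_smul, Complex.norm_of_nonneg ht.le, inv_mul_le_one₀ (by positivity)]
    linarith
  have hzero : (t : ℂ) ^ m * evalC a (torusPoint g) = 0 := by
    rw [← evalC_smul, ← norm_le_zero_iff, ← ha]
    exact hν.le_polyNorm a hmem
  exact (mul_eq_zero.1 hzero).resolve_left (pow_ne_zero m (mod_cast ht.ne'))

lemma polyNorm_mul_monom_le (a : Coef n m) {θ : Fin n → ℂ} (hθ : ∀ i, ‖θ i‖ ≤ 1) :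
    polyNorm n m ν (a * monom θ) ≤ polyNorm n m ν a :=
  polyNorm_le (polyNorm_nonneg a) fun z hz ↦ by
    rw [evalC_mul_monom]
    exact hν.le_polyNorm a ((hν.map_mul_le θ z hθ).trans hz)

end IsUnconditionalQuasinorm

end Polynomials

section DiagonalOperators

open scoped BigOperators

/-- The diagonal operator `(x_i) ↦ (b_i x_i)` into `ℓ₂^ι`. -/
noncomputable def diagonalOp {ι : Type*} (b : ι → ℂ) : (ι → ℂ) →ₗ[ℂ] EuclideanSpace ℂ ι :=
  (WithLp.linearEquiv 2 ℂ (ι → ℂ)).symm.toLinearMap ∘ₗ LinearMap.mulLeft ℂ b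

lemma diagonalOp_apply {ι : Type*} (b x : ι → ℂ) (i : ι) : diagonalOp b x i = b i * x i := rfl

lemma norm_diagonalOp_apply_le {ι : Type*} [Fintype ι] {ε : ι → ℂ} (hε : ∀ i, ‖ε i‖ ≤ 1)
    (b x : ι → ℂ) : ‖diagonalOp (ε * b) x‖ ≤ √(∑ i, ‖(x * b) i‖ ^ 2) := by
  rw [EuclideanSpace.norm_eq]
  gcongr with i
  rw [diagonalOp_apply, Pi.mul_apply, Pi.mul_apply, mul_assoc, norm_mul, mul_comm (b i)]
  exact mul_le_of_le_one_left (norm_nonneg _) (hε i)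

variable {n m : ℕ} {ν : (Fin n → ℂ) → ℝ}

lemma pi1With_diagonalOp_monom_le (hν : IsUnconditionalQuasinorm ν) {ε : Coef n m}
    (hε : ∀ α, ‖ε α‖ ≤ 1) {z : Fin n → ℂ} (hz : ν z ≤ 1) :
    pi1With (polyNorm n m ν) norm (diagonalOp (ε * monom z)) ≤ √m.centralBinom := by
  let G := Fin n → ZMod (2 * m + 1)
  let C : ℝ := √m.centralBinom / Fintype.card G
  let φ (g : G) : Coef n m →ₗ[ℂ] ℂ := (C : ℂ) • evalₗ (z * torusPoint g)
  have hC : 0 ≤ C := by positivity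
  have hφ_norm (g : G) (a : Coef n m) : ‖φ g a‖ = C * ‖evalC a (z * torusPoint g)‖ := by
    rw [LinearMap.smul_apply, evalₗ_apply, norm_smul, Complex.norm_of_nonneg hC]
  have hφ (g : G) (a : Coef n m) : ‖φ g a‖ ≤ C * polyNorm n m ν a := by
    rw [hφ_norm, mul_comm z]
    gcongr
    refine hν.le_polyNorm a ((hν.map_mul_le _ z fun i ↦ ?_).trans hz)
    exact (norm_torusPoint g i).le
  have hT (a : Coef n m) : ‖diagonalOp (ε * monom z) a‖ ≤ ∑ g, ‖φ g a‖ :=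
    calc ‖diagonalOp (ε * monom z) a‖ ≤ √(∑ α, ‖(a * monom z : Coef n m) α‖ ^ 2) :=
          norm_diagonalOp_apply_le hε _ _
      _ ≤ √m.centralBinom * 𝔼 g : G, ‖evalC (a * monom z) (torusPoint g)‖ :=
          sqrt_sum_norm_sq_le_expect (2 * m).lt_succ_self _
      _ = ∑ g, ‖φ g a‖ := by
          simp only [hφ_norm, evalC_mul_monom, ← mul_sum, Fintype.expect_eq_sum_div_card, C]
          ring
  refine (pi1With_le_of_dominated (fun _ ↦ hC) hφ hT).trans_eq ?_
  rw [sum_const, card_univ, nsmul_eq_mul, mul_div_cancel₀ _ (by positivity)]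

lemma FactorsThroughL1.norm_sum_mul_le (hν : IsUnconditionalQuasinorm ν) {b : Coef n m} {c : ℝ}
    (h : FactorsThroughL1 (polyNorm n m ν) (diagonalOp b) c) (a : Coef n m) :
    ‖∑ α, b α * a α‖ ≤ c * (√m.centralBinom * polyNorm n m ν a) := by
  obtain ⟨Ω, _, μ, R, S, hSR, hc⟩ := h
  let f (α : MultiIndex n m) := R (a α • Pi.single α 1)
  have htrace : ∑ α, b α * a α = ∑ α, S (f α) α := by
    refine sum_congr rfl fun α _ ↦ ?_
    simp [f, hSR, diagonalOp_apply, mul_comm]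
  have hR (g : Fin n → ZMod (2 * m + 1)) : ‖∑ α, monom (torusPoint g) α • f α‖ ≤
      opNormWith (polyNorm n m ν) norm R * polyNorm n m ν a :=
    calc ‖∑ α, monom (torusPoint g) α • f α‖ = ‖R (a * monom (torusPoint g))‖ := by
          rw [sum_monom_smul_map_smul_single]
      _ ≤ opNormWith (polyNorm n m ν) norm R * polyNorm n m ν (a * monom (torusPoint g)) :=
          norm_apply_le_opNormWith_mul (hν.polySeminorm m) hν.eq_zero_of_polyNorm_eq_zero R _
      _ ≤ opNormWith (polyNorm n m ν) norm R * polyNorm n m ν a := by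
          gcongr
          · exact opNormWith_nonneg _ _
          · exact hν.polyNorm_mul_monom_le a fun i ↦ (norm_torusPoint g i).le
  have hK := integral_sqrt_sum_norm_sq_le_expect (2 * m).lt_succ_self f
  calc ‖∑ α, b α * a α‖ ≤ ‖S‖ * ∫ w, √(∑ α, ‖f α w‖ ^ 2) ∂μ :=
        htrace ▸ norm_sum_apply_le_integral_sqrt S f
    _ ≤ ‖S‖ * (√m.centralBinom * (opNormWith (polyNorm n m ν) norm R * polyNorm n m ν a)) := by
        grw [hK]
        gcongr
        exact expect_le univ_nonempty fun g _ ↦ hR g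
    _ = opNormWith (polyNorm n m ν) norm R * ‖S‖ * (√m.centralBinom * polyNorm n m ν a) := by ring
    _ ≤ c * (√m.centralBinom * polyNorm n m ν a) := by
        gcongr
        exact mul_nonneg (Real.sqrt_nonneg _) (polyNorm_nonneg a)

end DiagonalOperators

lemma centralBinom_le_pow_div_factorial_sq_mul_two_pow (m : ℕ) :
    (m.centralBinom : ℝ) ≤ ((m : ℝ) ^ m / m.factorial) ^ 2 * 2 ^ m := by
  have hfact : m.centralBinom * m.factorial ^ 2 ≤ (m ^ m) ^ 2 * 2 ^ m :=
    calc m.centralBinom * m.factorial ^ 2 = (2 * m).factorial := by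
          rw [Nat.centralBinom, sq, ← mul_assoc]
          simpa [two_mul] using
            Nat.choose_mul_factorial_mul_factorial (Nat.le_mul_of_pos_left m two_pos)
      _ ≤ (2 * m) ^ m * m.factorial := Nat.factorial_two_mul_le m
      _ ≤ (2 * m) ^ m * m ^ m := by gcongr; exact m.factorial_le_pow
      _ = (m ^ m) ^ 2 * 2 ^ m := by rw [mul_pow]; ring
  rw [div_pow, div_mul_eq_mul_div, le_div_iff₀ (by positivity)]
  exact_mod_cast hfact

theorem chiMon_le_gl_general {n m : ℕ} {ν : (Fin n → ℂ) → ℝ} (hν : IsUnconditionalQuasinorm ν)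
    (a : Coef n m) {ε : Coef n m} (hε : ∀ α, ‖ε α‖ ≤ 1) {z : Fin n → ℂ} (hz : ν z ≤ 1) :
    ‖evalC (ε * a) z‖ ≤ m.centralBinom * glWith (Coef n m) (polyNorm n m ν) * polyNorm n m ν a := by
  have hB : 0 ≤ √m.centralBinom * polyNorm n m ν a :=
    mul_nonneg (Real.sqrt_nonneg _) (polyNorm_nonneg a)
  have heval : evalC (ε * a) z = ∑ α, (ε * monom z : Coef n m) α * a α := by
    simp only [evalC_eq_sum_monom, Pi.mul_apply, mul_right_comm]
  calc ‖evalC (ε * a) z‖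
      ≤ glWith (Coef n m) (polyNorm n m ν) * (pi1With (polyNorm n m ν) norm
          (diagonalOp (ε * monom z)) * (√m.centralBinom * polyNorm n m ν a)) :=
        le_glWith_mul_pi1With_mul (hν.polySeminorm m) hν.eq_zero_of_polyNorm_eq_zero _ hB
          fun c hc ↦ heval ▸ hc.norm_sum_mul_le hν a
    _ ≤ glWith (Coef n m) (polyNorm n m ν) *
          (√m.centralBinom * (√m.centralBinom * polyNorm n m ν a)) := by
        gcongr
        exacts [glWith_nonneg _, pi1With_diagonalOp_monom_le hν hε hz]
    _ = m.centralBinom * glWith (Coef n m) (polyNorm n m ν) * polyNorm n m ν a := by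
        rw [← mul_assoc (√_), Real.mul_self_sqrt (Nat.cast_nonneg _)]
        ring

/-- For `X_n = (ℂ^n, ν)` with 1-unconditional standard basis, the unconditional basis
constant of the monomials in `𝒫(^m X_n)` is at most `(m^m/m!)² · 2^m · gl(𝒫(^m X_n))`:
for every polynomial `∑ a_α z^α`, all scalars `|ε_α| ≤ 1` and all `z` with `ν z ≤ 1`,
`|∑ ε_α a_α z^α| ≤ (m^m/m!)² · 2^m · gl(𝒫(^m X_n)) · ‖∑ a_α z^α‖_{𝒫(^m X_n)}`. -/
theorem chiMon_le_gl (n m : ℕ) (hn : 0 < n) (hm : 0 < m)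
    (ν : (Fin n → ℂ) → ℝ)
    (hadd : ∀ z w, ν (z + w) ≤ ν z + ν w)
    (hsmul : ∀ (c : ℂ) (z), ν (c • z) = ‖c‖ * ν z)
    (hdef : ∀ z, ν z = 0 → z = 0)
    (huncond : ∀ (ε z : Fin n → ℂ), (∀ i, ‖ε i‖ ≤ 1) → ν (fun i => ε i * z i) ≤ ν z) :
    ∀ (a ε : Coef n m), (∀ α, ‖ε α‖ ≤ 1) →
      ∀ z : Fin n → ℂ, ν z ≤ 1 →
        ‖evalC (fun α => ε α * a α) z‖
          ≤ ((m : ℝ) ^ m / (Nat.factorial m : ℝ)) ^ 2 * 2 ^ m *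
              glWith (Coef n m) (polyNorm n m ν) * polyNorm n m ν a :=
  fun a _ hε _ hz ↦ (chiMon_le_gl_general ⟨hsmul, hdef, huncond⟩ a hε hz).trans <| by
    gcongr
    exacts [polyNorm_nonneg a, glWith_nonneg _, centralBinom_le_pow_div_factorial_sq_mul_two_pow m]
end
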